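/- Let p₀,p₁,p₂,p₃ ∈ ℝ³ span a small simplex S that contains its own circumcenter, with edge lengths y₁ = |p₀−p₁|, y₂ = |p₀−p₂|, y₃ = |p₀−p₃|, y₄ = |p₂−p₃|, y₅ = |p₁−p₃|, y₆ = |p₁−p₂|. Suppose y₁ ∈ [2.51, 2√2] and one of the following holds: (1) y₂ ∈ [2.06, 2.51] and y₃,y₄,y₅,y₆ ∈ [2, 2.51]; (2) y₄ ∈ [2.06, 2.51] and y₂,y₃,y₅,y₆ ∈ [2, 2.51]; (3) y₅ ∈ [2.08, 2.51] and y₂,y₃,y₄,y₆ ∈ [2, 2.51]. Then vor(S) < 0. -/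

import Mathlib

open MeasureTheory Real

noncomputable section

abbrev E3 : Type := EuclideanSpace ℝ (Fin 3)

/-- The density of the regular octahedron. -/
def δoct : ℝ := (-3 * π + 12 * arccos (1 / Real.sqrt 3)) / Real.sqrt 8

/-- The circumradius `η(a,b,c)` of a triangle with side lengths `a`, `b`, `c`. -/
def eta (a b c : ℝ) : ℝ :=
  a * b * c / Real.sqrt ((a + b + c) * (b + c - a) * (a + c - b) * (a + b - c))

/-- A simplex is small if all six edge lengths are at least `2` and each of the
four triangular faces has circumradius at most `√2`. -/
def IsSmall (p₀ p₁ p₂ p₃ : E3) : Prop :=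
  (2 ≤ dist p₀ p₁ ∧ 2 ≤ dist p₀ p₂ ∧ 2 ≤ dist p₀ p₃ ∧
    2 ≤ dist p₁ p₂ ∧ 2 ≤ dist p₁ p₃ ∧ 2 ≤ dist p₂ p₃) ∧
  eta (dist p₀ p₁) (dist p₀ p₂) (dist p₁ p₂) ≤ Real.sqrt 2 ∧
  eta (dist p₀ p₁) (dist p₀ p₃) (dist p₁ p₃) ≤ Real.sqrt 2 ∧
  eta (dist p₀ p₂) (dist p₀ p₃) (dist p₂ p₃) ≤ Real.sqrt 2 ∧
  eta (dist p₁ p₂) (dist p₁ p₃) (dist p₂ p₃) ≤ Real.sqrt 2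

/-- `S = conv {p₀, p₁, p₂, p₃}` contains its own circumcenter. -/
def ContainsCircumcenter (p₀ p₁ p₂ p₃ : E3) : Prop :=
  ∃ c ∈ convexHull ℝ ({p₀, p₁, p₂, p₃} : Set E3),
    dist c p₀ = dist c p₁ ∧ dist c p₀ = dist c p₂ ∧ dist c p₀ = dist c p₃

/-- The Voronoi score of the simplex `S = conv {p₀, p₁, p₂, p₃}` at the vertex `p₀`:
`vor(S) = 4·(-δ_oct · vol {x ∈ S : |x-p₀| ≤ |x-pⱼ|, j = 1,2,3} + vol (B(p₀,1) ∩ C(S)))`,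
where `C(S)` is the cone over `S` with apex `p₀`. -/
def vor (p₀ p₁ p₂ p₃ : E3) : ℝ :=
  4 * (-δoct * (volume {x ∈ convexHull ℝ ({p₀, p₁, p₂, p₃} : Set E3) |
        dist x p₀ ≤ dist x p₁ ∧ dist x p₀ ≤ dist x p₂ ∧ dist x p₀ ≤ dist x p₃}).toReal +
      (volume (Metric.closedBall p₀ 1 ∩
        {y : E3 | ∃ x ∈ convexHull ℝ ({p₀, p₁, p₂, p₃} : Set E3), ∃ t : ℝ, 0 ≤ t ∧
          y = p₀ + t • (x - p₀)})).toReal)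

/-!
The cell in the Voronoi score is compared with the solid angle `Ω` at `p₀`: the score is
`4 (Ω / 3 - δoct * vol)`, where `vol` is the volume of the part of the Voronoi cell of `p₀` inside
the simplex. Girard's inequality and an identity between products of three complex numbers, whose
arguments are the dihedral angles, give `Ω ≤ 2 arctan (D / A)`, with `D` the triple product of the
edge vectors at `p₀` and `A` a polynomial in edge lengths. Each of the six flags edge ⊂ face ⊂
simplex at `p₀` contributes to the cell a tetrahedron spanned by `p₀`, the midpoint of the edge, the
circumcenter of the face and that of the simplex, so `vol` is bounded below by an explicit function
of the squared edge lengths.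

A quarter of a regular octahedron has score `0`, with `D / A = 3 - 2√2`. As `arctan` is concave,
its tangent line there turns the claim into a polynomial inequality in the deviations of the squared
edge lengths from those of the quarter octahedron. The two sides are separated by a quadratic
polynomial; after that, one half is a matter of signs of coefficients, and the other is concave in
every variable but one, so that it needs to be checked only at vertices of a box.
-/

section Arctan

lemma antitone_arctan_term {x : ℝ} (hx₀ : 0 ≤ x) (hx₁ : x ≤ 1) :
    Antitone fun n : ℕ => x ^ (2 * n + 1) / ((2 * n + 1 : ℕ) : ℝ) := by
  intro m n hmn
  dsimp only
  gcongr ?_ / ?_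
  · exact pow_le_pow_of_le_one hx₀ hx₁ (by lia)
  · exact_mod_cast (by lia : 2 * m + 1 ≤ 2 * n + 1)

lemma tendsto_sum_arctan {x : ℝ} (hx₀ : 0 ≤ x) (hx₁ : x < 1) :
    Filter.Tendsto
      (fun n : ℕ => ∑ i ∈ Finset.range n, (-1) ^ i * (x ^ (2 * i + 1) / ((2 * i + 1 : ℕ) : ℝ)))
      Filter.atTop (nhds (arctan x)) := by
  simp only [← mul_div_assoc]
  exact (hasSum_arctan (by rwa [norm_of_nonneg hx₀])).tendsto_sum_nat

lemma sum_range_le_arctan {x : ℝ} (hx₀ : 0 ≤ x) (hx₁ : x < 1) (k : ℕ) :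
    ∑ i ∈ Finset.range (2 * k), (-1) ^ i * (x ^ (2 * i + 1) / ((2 * i + 1 : ℕ) : ℝ)) ≤ arctan x :=
  (antitone_arctan_term hx₀ hx₁.le).alternating_series_le_tendsto (tendsto_sum_arctan hx₀ hx₁) k

lemma arctan_le_sum_range {x : ℝ} (hx₀ : 0 ≤ x) (hx₁ : x < 1) (k : ℕ) :
    arctan x ≤
      ∑ i ∈ Finset.range (2 * k + 1), (-1) ^ i * (x ^ (2 * i + 1) / ((2 * i + 1 : ℕ) : ℝ)) :=
  (antitone_arctan_term hx₀ hx₁.le).tendsto_le_alternating_series (tendsto_sum_arctan hx₀ hx₁) k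

lemma concaveOn_arctan : ConcaveOn ℝ (Set.Ici 0) arctan := by
  refine AntitoneOn.concaveOn_of_deriv (convex_Ici 0) continuous_arctan.continuousOn
    differentiable_arctan.differentiableOn fun x hx y _ hxy => ?_
  rw [interior_Ici, Set.mem_Ioi] at hx
  rw [Real.deriv_arctan]
  dsimp only
  gcongr

lemma arctan_le_tangent {s t : ℝ} (hs : 0 ≤ s) (ht : 0 ≤ t) :
    arctan t ≤ arctan s + (t - s) / (1 + s ^ 2) := by
  rcases lt_trichotomy s t with hst | rfl | hst
  · have := concaveOn_arctan.slope_le_of_hasDerivAt hs ht hst (hasDerivAt_arctan s)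
    rw [slope_def_field, div_le_iff₀ (sub_pos.2 hst)] at this
    linear_combination this
  · simp
  · have := concaveOn_arctan.le_slope_of_hasDerivAt ht hs hst (hasDerivAt_arctan s)
    rw [slope_def_field, le_div_iff₀ (sub_pos.2 hst)] at this
    linear_combination this

end Arctan

section OctahedralDensity

lemma arccos_one_div_sqrt_three : arccos (1 / √3) = π / 4 + arctan (3 - 2 * √2) := by
  have hsq : √2 ^ 2 = 2 := sq_sqrt (by norm_num)
  have hadd : arctan 1 + arctan (3 - 2 * √2) = arctan √2 := by
    rw [arctan_add (by nlinarith [sqrt_nonneg 2])]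
    congr 1
    rw [div_eq_iff (by nlinarith [one_lt_sqrt_two])]
    linear_combination -2 * hsq
  rw [← arctan_one, hadd, arccos_eq_arctan (by positivity), div_pow, sq_sqrt (by norm_num),
    show (1 : ℝ) - 1 ^ 2 / 3 = 2 / 3 by norm_num, sqrt_div (by norm_num)]
  field_simp

lemma δoct_eq_mul_arctan : δoct = 3 * √2 * arctan (3 - 2 * √2) := by
  have hsq : √2 ^ 2 = 2 := sq_sqrt (by norm_num)
  have h8 : √8 = 2 * √2 := by
    rw [show (8 : ℝ) = 2 ^ 2 * 2 by norm_num, sqrt_mul (by norm_num), sqrt_sq (by norm_num)]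
  rw [δoct, arccos_one_div_sqrt_three, h8, div_eq_iff (by positivity)]
  linear_combination (-6 * arctan (3 - 2 * √2)) * hsq

lemma sqrt_two_mem_Ioo : √2 ∈ Set.Ioo (1.41421356 : ℝ) 1.41421357 :=
  ⟨(lt_sqrt (by norm_num)).2 (by norm_num), (sqrt_lt' (by norm_num)).2 (by norm_num)⟩

lemma arctan_three_sub_mem_Ioo : arctan (3 - 2 * √2) ∈ Set.Ioo (0.16991 : ℝ) 0.16992 := by
  obtain ⟨hl, hu⟩ := sqrt_two_mem_Ioo
  obtain ⟨t, ht⟩ : ∃ t, t = 3 - 2 * √2 := ⟨_, rfl⟩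
  have htl : 0.17157286 ≤ t := by linarith
  have htu : t ≤ 0.17157288 := by linarith
  have ht₀ : 0 ≤ t := by linarith
  have hlower := sum_range_le_arctan ht₀ (by linarith) 2
  have hupper := arctan_le_sum_range ht₀ (by linarith) 1
  have ht3 : t ^ 3 ≤ 0.17157288 ^ 3 := by gcongr
  have ht3' : 0.17157286 ^ 3 ≤ t ^ 3 := by gcongr
  have ht5' : 0.17157286 ^ 5 ≤ t ^ 5 := by gcongr
  have ht7 : t ^ 7 ≤ 0.17157288 ^ 7 := by gcongr
  have ht5 : t ^ 5 ≤ 0.17157288 ^ 5 := by gcongr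
  norm_num [Finset.sum_range_succ] at hlower hupper ht3 ht3' ht5 ht5' ht7
  rw [← ht]
  constructor <;> linarith

lemma arctan_three_sub_eq : arctan (3 - 2 * √2) = δoct * √2 / 6 := by
  rw [δoct_eq_mul_arctan]
  linear_combination (-1 / 2 * arctan (3 - 2 * √2)) * sq_sqrt (zero_le_two (α := ℝ))

lemma lt_δoct : 0.7208 < δoct := by
  rw [δoct_eq_mul_arctan]
  nlinarith [sqrt_two_mem_Ioo.1, arctan_three_sub_mem_Ioo.1]

lemma δoct_mul_sqrt_two_lt : δoct * √2 < 1.01952 := by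
  linarith [arctan_three_sub_mem_Ioo.2, arctan_three_sub_eq]

end OctahedralDensity

section EdgeEstimate

/-- The Gram determinant of three vectors `u₁`, `u₂`, `u₃`, in terms of `xᵢ = ⟪uᵢ, uᵢ⟫` and
`gᵢⱼ = ⟪uᵢ, uⱼ⟫`. -/
def gramDet (x₁ x₂ x₃ g₁₂ g₁₃ g₂₃ : ℝ) : ℝ :=
  x₁ * x₂ * x₃ + 2 * g₁₂ * g₁₃ * g₂₃ - x₁ * g₂₃ ^ 2 - x₂ * g₁₃ ^ 2 - x₃ * g₁₂ ^ 2

/-- The numerator in Cramer's rule for the coordinate of the circumcenter of `0, uₖ, uᵢ, uⱼ` along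
`uₖ`; the denominator is `gramDet`. -/
def cramerNum (xₖ xᵢ xⱼ gₖᵢ gₖⱼ gᵢⱼ : ℝ) : ℝ :=
  (xₖ * (xᵢ * xⱼ - gᵢⱼ ^ 2) - xᵢ * (gₖᵢ * xⱼ - gᵢⱼ * gₖⱼ) - xⱼ * (gₖⱼ * xᵢ - gᵢⱼ * gₖᵢ)) / 2

/-- The sum of the coordinates along `u` and `v` of the circumcenter of the triangle `0, u, v`,
where `x = ⟪u, u⟫`, `y = ⟪v, v⟫` and `g = ⟪u, v⟫`. -/
def faceSum (x y g : ℝ) : ℝ :=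
  (2 * x * y - g * (x + y)) / (2 * (x * y - g ^ 2))

/-- The range of the shifts when the squares of the edge lengths `y₁, …, y₆` are written
`8 - a, 4 + b, 4 + c, 4 + d, 4 + e, 4 + f`; it contains the case `y₁ ∈ [2.51, 2√2]` and
`yᵢ ∈ [2, 2.51]` for `i ≠ 1`. -/
structure EdgeBox (a b c d e f : ℝ) : Prop where
  mem_a : a ∈ Set.Icc 0 1.7
  mem_b : b ∈ Set.Icc 0 2.301
  mem_c : c ∈ Set.Icc 0 2.301
  mem_d : d ∈ Set.Icc 0 2.301
  mem_e : e ∈ Set.Icc 0 2.301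
  mem_f : f ∈ Set.Icc 0 2.301

variable {a b c d e f : ℝ}

lemma EdgeBox.swap (h : EdgeBox a b c d e f) : EdgeBox a c b d f e :=
  ⟨h.mem_a, h.mem_c, h.mem_b, h.mem_d, h.mem_f, h.mem_e⟩

/-- `gramDet` as a function of the shifts of `EdgeBox`. -/
def shiftedDet (a b c d e f : ℝ) : ℝ :=
  gramDet (8 - a) (4 + b) (4 + c) ((8 - a + b - f) / 2) ((8 - a + c - e) / 2) ((4 + b + c - d) / 2)

/-- The coordinate numerator `cramerNum` along the long edge, as a function of the shifts. -/
def longNum (a b c d e f : ℝ) : ℝ :=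
  cramerNum (8 - a) (4 + b) (4 + c) ((8 - a + b - f) / 2) ((8 - a + c - e) / 2)
    ((4 + b + c - d) / 2)

/-- The coordinate numerator `cramerNum` along the edge of squared length `4 + b`, as a function of
the shifts; swapping `b, e` with `c, f` gives the one along the third edge. -/
def shortNum (a b c d e f : ℝ) : ℝ :=
  cramerNum (4 + b) (8 - a) (4 + c) ((8 - a + b - f) / 2) ((4 + b + c - d) / 2)
    ((8 - a + c - e) / 2)

lemma faceSum_eq {x y g : ℝ} (h : 0 < x * y - g ^ 2) :
    faceSum x y g = 1 / 2 + (x - g) * (y - g) / (2 * (x * y - g ^ 2)) := by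
  unfold faceSum
  field_simp
  ring

lemma le_faceSum_of_mul_le {x y g m : ℝ} (h : 0 < x * y - g ^ 2)
    (hm : 2 * (m - 1 / 2) * (x * y - g ^ 2) ≤ (x - g) * (y - g)) : m ≤ faceSum x y g := by
  rw [faceSum_eq h, ← sub_le_iff_le_add', le_div_iff₀ (by positivity)]
  linarith

lemma le_faceSum_of_long (ha : a ∈ Set.Icc 0 1.7) (hc : c ∈ Set.Icc 0 2.301)
    (he : e ∈ Set.Icc 0 2.301) :
    0.5 + 0.05 * a ≤ faceSum (8 - a) (4 + c) ((8 - a + c - e) / 2) := by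
  obtain ⟨⟨ha, ha'⟩, ⟨hc, hc'⟩, ⟨he, he'⟩⟩ := And.intro ha (And.intro hc he)
  have harea : 0 < (8 - a) * (4 + c) - ((8 - a + c - e) / 2) ^ 2 := by
    nlinarith only [ha, hc, he, ha', hc', he']
  apply le_faceSum_of_mul_le harea
  have hx : 0 ≤ 8 - a - c + e - 2.35 * a := by linarith
  have hbase : 0 ≤ (8 - a - c + e) - 0.4 * ((8 - a) * (4 + c) - ((8 - a + c - e) / 2) ^ 2)
      + 2.35 * (c + e) := by
    nlinarith only [ha, hc, he, ha', hc', he']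
  linarith only [mul_nonneg ha hbase, mul_nonneg (add_nonneg hc he) hx]

lemma le_faceSum_of_short (hb : b ∈ Set.Icc 0 2.301) (hc : c ∈ Set.Icc 0 2.301)
    (hd : d ∈ Set.Icc 0 2.301) :
    0.6666 - 0.036 * (b + c) + 0.05 * d ≤ faceSum (4 + b) (4 + c) ((4 + b + c - d) / 2) := by
  obtain ⟨⟨hb, hb'⟩, ⟨hc, hc'⟩, ⟨hd, hd'⟩⟩ := And.intro hb (And.intro hc hd)
  have harea : 0 < (4 + b) * (4 + c) - ((4 + b + c - d) / 2) ^ 2 := by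
    nlinarith only [hb, hc, hd, hb', hc', hd']
  apply le_faceSum_of_mul_le harea
  obtain ⟨s, hs⟩ : ∃ s, s = b + c := ⟨_, rfl⟩
  have hs₀ : 0 ≤ s := by linarith
  -- For fixed `s` and `d` the claim is decreasing in `(b - c) ^ 2`, which may be replaced by `v`.
  suffices ∃ v, (b - c) ^ 2 ≤ v ∧
      0 ≤ (4 + d) ^ 2 - v - 8 * (12 + 2 * s + 2 * d + s * d / 2 - d ^ 2 / 4 - v / 4) *
        (0.1666 - 0.036 * s + 0.05 * d) by
    obtain ⟨v, hv, hpos⟩ := this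
    have hm : 0 ≤ 1 - 2 * (0.1666 - 0.036 * s + 0.05 * d) := by linarith
    subst hs
    linarith only [mul_nonneg (sub_nonneg.2 hv) hm, hpos]
  rw [← sub_nonneg] at hd'
  have hdd := mul_nonneg hd hd'
  rcases le_total s 2.301 with hs' | hs'
  · refine ⟨s ^ 2, by rw [hs]; nlinarith only [hb, hc], ?_⟩
    rw [← sub_nonneg] at hs'
    nlinarith only [hs₀, hd, hs', hd', hdd, mul_nonneg hs₀ hd, mul_nonneg hs₀ hs',
      mul_nonneg hd hs', mul_nonneg hs₀ hd', mul_nonneg hs' hd']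
  · refine ⟨2.301 ^ 2, sq_le_sq' (by linarith) (by linarith), ?_⟩
    have hs'' : 0 ≤ 4.602 - s := by linarith
    rw [← sub_nonneg] at hs'
    nlinarith only [hs', hs'', hd, hd', hdd, mul_nonneg hs' hs'', mul_nonneg hs' hd,
      mul_nonneg hs' hd', mul_nonneg hd hs'', mul_nonneg hs'' hd']

/-- A lower bound for the denominator in the formula for the tangent of half the solid angle, from
linear lower bounds for the square roots `y₁, y₂, y₃`. -/
def denomBound (a b c d e f : ℝ) : ℝ :=
  32.96 - e - f - 1.414 * d + 3.78 * (b + c) - 3.13 * a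

lemma denomBound_pos (h : EdgeBox a b c d e f) : 0 < denomBound a b c d e f := by
  obtain ⟨⟨-, ha'⟩, ⟨hb, -⟩, ⟨hc, -⟩, ⟨-, hd'⟩, ⟨-, he'⟩, ⟨-, hf'⟩⟩ := h
  unfold denomBound
  linarith

lemma denomBound_le (h : EdgeBox a b c d e f) {y₁ y₂ y₃ : ℝ} (hy₁ : 0 ≤ y₁) (hy₂ : 0 ≤ y₂)
    (hy₃ : 0 ≤ y₃) (h₁ : y₁ ^ 2 = 8 - a) (h₂ : y₂ ^ 2 = 4 + b) (h₃ : y₃ ^ 2 = 4 + c) :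
    denomBound a b c d e f ≤ y₁ * y₂ * y₃ + y₁ * ((4 + b + c - d) / 2)
      + y₂ * ((8 - a + c - e) / 2) + y₃ * ((8 - a + b - f) / 2) := by
  obtain ⟨⟨ha, ha'⟩, ⟨hb, hb'⟩, ⟨hc, hc'⟩, ⟨hd, hd'⟩, ⟨he, he'⟩, ⟨hf, hf'⟩⟩ := h
  have hle₁ : 2.828 - 0.1871 * a ≤ y₁ := abs_le_of_sq_le_sq' (by rw [h₁]; nlinarith) hy₁ |>.2
  have hle₂ : 2 + 0.22 * b ≤ y₂ := abs_le_of_sq_le_sq' (by rw [h₂]; nlinarith) hy₂ |>.2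
  have hle₃ : 2 + 0.22 * c ≤ y₃ := abs_le_of_sq_le_sq' (by rw [h₃]; nlinarith) hy₃ |>.2
  have hpos₁ : 0 ≤ 2.828 - 0.1871 * a := by linarith
  have hp : 0 ≤ (8 - a + b - f) / 2 := by linarith
  have hq : 0 ≤ (8 - a + c - e) / 2 := by linarith
  have hr : 0 ≤ (4 + b + c - d) / 2 := by linarith
  refine le_trans (b := (2.828 - 0.1871 * a) * (2 + 0.22 * b) * (2 + 0.22 * c)
    + (2.828 - 0.1871 * a) * ((4 + b + c - d) / 2) + (2 + 0.22 * b) * ((8 - a + c - e) / 2)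
    + (2 + 0.22 * c) * ((8 - a + b - f) / 2)) ?_ (by gcongr)
  rw [← sub_nonneg] at ha' he' hf'
  unfold denomBound
  nlinarith only [mul_nonneg (mul_nonneg hb hc) hpos₁, mul_nonneg hb ha', mul_nonneg hc ha',
    mul_nonneg hb he', mul_nonneg hc hf', mul_nonneg ha hd, mul_nonneg hb hc, ha, hb, hc, ha']

/-- The lower bound for the contribution of the Voronoi cell, a polynomial in the shifts. -/
def cellBound (a b c d e f : ℝ) : ℝ :=
  0.5406 * (longNum a b c d e f * (0.6666 - 0.036 * (b + c) + 0.05 * d)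
      + shortNum a b c d e f * (0.5 + 0.05 * a) + shortNum a c b d f e * (0.5 + 0.05 * a))
    - 0.001726 * shiftedDet a b c d e f - 0.05522

/-- A quadratic, found by linear programming, which separates `5.8285 * shiftedDet / denomBound`
from `cellBound`. -/
def separator (a b c d e f : ℝ) : ℝ :=
  5.66 + 1.31 * a + 0.8 * (b + c) + 0.27 * d + 1.61 * (e + f) - 0.04 * a ^ 2
    - 0.18 * a * (b + c) + 0.51 * a * d - 0.22 * (b ^ 2 + c ^ 2) + 0.23 * b * c
    + 0.5 * (b + c) * d - 0.36 * d ^ 2 + 0.52 * d * (e + f) - 0.13 * (e ^ 2 + f ^ 2) + 0.31 * e * f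

lemma shiftedDet_le_separator_mul (h : EdgeBox a b c d e f) :
    5.8285 * shiftedDet a b c d e f ≤ separator a b c d e f * denomBound a b c d e f := by
  obtain ⟨⟨ha, ha'⟩, ⟨hb, hb'⟩, ⟨hc, hc'⟩, ⟨hd, hd'⟩, ⟨he, he'⟩, ⟨hf, hf'⟩⟩ := h
  rw [← sub_nonneg] at ha' hb' hc' hd' he' hf'
  -- A Handelman certificate: after subtracting `cert` all coefficients are nonnegative.
  obtain ⟨cert, hcert⟩ : ∃ cert : ℝ, cert =
        0.394 * ((2.301 - e) * a * f + (2.301 - f) * a * e) +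
        0.087 * (2.301 - d) * a^2 +
        0.026 * ((1.7 - a)^2 * e + (1.7 - a)^2 * f) +
        1.042 * ((2.301 - b) * a * c + (2.301 - c) * a * b) +
        0.003 * ((2.301 - b)^2 * d + (2.301 - c)^2 * d) +
        0.202 * ((2.301 - e)^2 * a + (2.301 - f)^2 * a) +
        0.836 * ((2.301 - b) * b^2 + (2.301 - c) * c^2) +
        2.072 * ((2.301 - d) * b * d + (2.301 - d) * c * d) +
        0.137 * ((1.7 - a) * (2.301 - b) * e + (1.7 - a) * (2.301 - c) * f) +
        0.129 * (2.301 - d)^2 * d +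
        0.041 * ((1.7 - a) * (2.301 - e) * e + (1.7 - a) * (2.301 - f) * f) +
        0.026 * ((1.7 - a) * (2.301 - d) * b + (1.7 - a) * (2.301 - d) * c) +
        1.281 * ((1.7 - a) * b * f + (1.7 - a) * c * e) +
        1.055 * (2.301 - d) * a * d +
        0.684 * ((1.7 - a) * d * e + (1.7 - a) * d * f) +
        0.187 * (1.7 - a) * e * f +
        0.141 * ((2.301 - b) * (2.301 - e) * b + (2.301 - c) * (2.301 - f) * c) +
        1.691 * ((2.301 - e) * b * c + (2.301 - f) * b * c) +
        0.289 * ((2.301 - e) * b * f + (2.301 - f) * c * e) +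
        0.495 * ((2.301 - e) * c * e + (2.301 - f) * b * f) +
        0.379 * ((2.301 - d) * d * e + (2.301 - d) * d * f) +
        0.34 * ((2.301 - e) * d * e + (2.301 - f) * d * f) +
        0.013 * ((2.301 - e) * d * f + (2.301 - f) * d * e) +
        0.184 * ((2.301 - e) * e * f + (2.301 - f) * e * f) := ⟨_, rfl⟩
  have hcert_nonneg : 0 ≤ cert := by rw [hcert]; positivity
  have hremainder : 0 ≤ separator a b c d e f * denomBound a b c d e f
      - 5.8285 * shiftedDet a b c d e f - cert := by
    rw [hcert]
    unfold separator denomBound shiftedDet gramDet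
    ring_nf
    positivity
  linarith

lemma nonneg_of_chord {u t p₀ pᵤ pₜ h : ℝ} (hu : 0 < u) (ht : t ∈ Set.Icc 0 u) (h₀ : 0 ≤ p₀)
    (hᵤ : 0 ≤ pᵤ) (hh : 0 ≤ h)
    (heq : u * pₜ = (u - t) * p₀ + t * pᵤ + u * (t * (u - t)) * h) : 0 ≤ pₜ := by
  have ht₀ : 0 ≤ t := ht.1
  have : 0 ≤ u - t := sub_nonneg.2 ht.2
  exact nonneg_of_mul_nonneg_right (heq ▸ by positivity) hu

/-- What remains of `cellBound` after subtracting `separator` and a multiple of the excess of the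
sum of the shifts over `0.24`. -/
def surplus (a b c d e f : ℝ) : ℝ :=
  cellBound a b c d e f - 0.025 * (a + b + c + d + e + f - 0.24) - separator a b c d e f

lemma surplus_swap (a b c d e f : ℝ) : surplus a c b d f e = surplus a b c d e f := by
  unfold surplus cellBound longNum shortNum shiftedDet separator cramerNum gramDet
  ring

lemma surplus_nonneg_of_a (h : EdgeBox a b c d e f)
    (H : ∀ a ∈ ({0, 1.7} : Set ℝ), EdgeBox a b c d e f → 0 ≤ surplus a b c d e f) :
    0 ≤ surplus a b c d e f := by
  refine nonneg_of_chord (h := 0.058285 + 0.02703 * a + 0.013515 * (b + c + e + f)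
      + 0.02457125 * d + 0.0067575 * a * d + 0.00337875 * d * (b + c + e + f)
      + 0.0067575 * (b - c) * (e - f)) (by norm_num) h.mem_a
    (H 0 (by simp) { h with mem_a := by norm_num })
    (H 1.7 (by simp) { h with mem_a := by norm_num }) ?_ ?_
  · obtain ⟨⟨ha, -⟩, ⟨hb, hb'⟩, ⟨hc, hc'⟩, ⟨hd, -⟩, ⟨he, he'⟩, ⟨hf, hf'⟩⟩ := h
    nlinarith only [mul_nonneg ha hd, mul_nonneg hd he, mul_nonneg hd hf, mul_nonneg hd hb,
      mul_nonneg hd hc, mul_nonneg hb he, mul_nonneg hc hf, mul_nonneg hb (sub_nonneg.2 hf'),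
      mul_nonneg hc (sub_nonneg.2 he'), ha, hb, hb', hc, hc', hd, he, hf]
  · unfold surplus cellBound longNum shortNum shiftedDet separator cramerNum gramDet
    ring

lemma surplus_nonneg_of_b (h : EdgeBox a b c d e f)
    (H : ∀ b ∈ ({0, 2.301} : Set ℝ), EdgeBox a b c d e f → 0 ≤ surplus a b c d e f) :
    0 ≤ surplus a b c d e f := by
  refine nonneg_of_chord (h := 0.1101386092 + 0.0037842 * a - 0.0097308 * (b + c) + 0.0232458 * d
      + 0.0728038523 * e + 0.0097308 * f - 0.0024327 * a * d + 0.00337875 * a * e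
      - 0.0024327 * b * e - 0.0048654 * c * d + 0.0024327 * c * f + 0.00581145 * d * e)
    (by norm_num) h.mem_b (H 0 (by simp) { h with mem_b := by norm_num })
    (H 2.301 (by simp) { h with mem_b := by norm_num }) ?_ ?_
  · obtain ⟨⟨ha, ha'⟩, ⟨hb, hb'⟩, ⟨hc, hc'⟩, ⟨hd, hd'⟩, ⟨he, he'⟩, ⟨hf, -⟩⟩ := h
    nlinarith [mul_nonneg ha he, mul_nonneg hd he, mul_nonneg hc hf]
  · unfold surplus cellBound longNum shortNum shiftedDet separator cramerNum gramDet
    ring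

lemma surplus_nonneg_of_c (h : EdgeBox a b c d e f)
    (H : ∀ c ∈ ({0, 2.301} : Set ℝ), EdgeBox a b c d e f → 0 ≤ surplus a b c d e f) :
    0 ≤ surplus a b c d e f := by
  rw [← surplus_swap]
  exact surplus_nonneg_of_b h.swap fun c hc h' => surplus_swap a c b d f e ▸ H c hc h'.swap

lemma surplus_nonneg_of_e (h : EdgeBox a b c d e f)
    (H : ∀ e ∈ ({0, 2.301} : Set ℝ), EdgeBox a b c d e f → 0 ≤ surplus a b c d e f) :
    0 ≤ surplus a b c d e f := by
  refine nonneg_of_chord (h := 0.003424 + 0.013515 * a + 0.033356 * b + 0.00337875 * a * b)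
    (by norm_num) h.mem_e (H 0 (by simp) { h with mem_e := by norm_num })
    (H 2.301 (by simp) { h with mem_e := by norm_num }) ?_ ?_
  · have ha := h.mem_a.1
    have hb := h.mem_b.1
    positivity
  · unfold surplus cellBound longNum shortNum shiftedDet separator cramerNum gramDet
    ring

lemma surplus_nonneg_of_f (h : EdgeBox a b c d e f)
    (H : ∀ f ∈ ({0, 2.301} : Set ℝ), EdgeBox a b c d e f → 0 ≤ surplus a b c d e f) :
    0 ≤ surplus a b c d e f := by
  rw [← surplus_swap]
  exact surplus_nonneg_of_e h.swap fun f hf h' => surplus_swap a c b d f e ▸ H f hf h'.swap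

set_option maxHeartbeats 1600000 in
-- one linear program for each of the 32 vertices
lemma surplus_vertex_nonneg (hd : d ∈ Set.Icc 0 2.301) :
    ∀ a ∈ ({0, 1.7} : Set ℝ), ∀ b ∈ ({0, 2.301} : Set ℝ), ∀ c ∈ ({0, 2.301} : Set ℝ),
      ∀ e ∈ ({0, 2.301} : Set ℝ), ∀ f ∈ ({0, 2.301} : Set ℝ), 0 ≤ surplus a b c d e f := by
  have hd₀ : 0 ≤ d := hd.1
  have hd₁ : 0 ≤ 2.301 - d := sub_nonneg.2 hd.2
  have h₂ := mul_nonneg hd₀ hd₁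
  have h₃ := mul_nonneg h₂ hd₀
  have h₄ := mul_nonneg h₂ hd₁
  have h₅ := mul_nonneg hd₁ (sq_nonneg (d - 0.65))
  have h₆ := mul_nonneg hd₁ (sq_nonneg (d - 1.35))
  have h₇ := mul_nonneg hd₀ (sq_nonneg (d - 0.65))
  have h₈ := mul_nonneg hd₀ (sq_nonneg (d - 1.35))
  rintro a (rfl | rfl) b (rfl | rfl) c (rfl | rfl) e (rfl | rfl) f (rfl | rfl) <;>
  · unfold surplus cellBound longNum shortNum shiftedDet separator cramerNum gramDet
    linarith only [hd₀, hd₁, h₂, h₃, h₄, h₅, h₆, h₇, h₈]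

-- `surplus` is concave in each variable other than `d`, so it is smallest at vertices.
lemma surplus_nonneg (h : EdgeBox a b c d e f) : 0 ≤ surplus a b c d e f :=
  surplus_nonneg_of_a h fun a ha h => surplus_nonneg_of_b h fun b hb h =>
    surplus_nonneg_of_c h fun c hc h => surplus_nonneg_of_e h fun e he h =>
      surplus_nonneg_of_f h fun f hf h => surplus_vertex_nonneg h.mem_d a ha b hb c hc e he f hf

lemma det_div_denomBound_lt_cellBound (h : EdgeBox a b c d e f)
    (hsum : 0.24 < a + b + c + d + e + f) :
    5.8285 * shiftedDet a b c d e f / denomBound a b c d e f < cellBound a b c d e f := by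
  refine ((div_le_iff₀ (denomBound_pos h)).2 (shiftedDet_le_separator_mul h)).trans_lt ?_
  have := surplus_nonneg h
  unfold surplus at this
  linarith

lemma half_angle_estimate (h : EdgeBox a b c d e f) (hsum : 0.24 < a + b + c + d + e + f)
    {D A m₁ m₂ m₃ : ℝ} (hD : 0 ≤ D) (hD_sq : D ^ 2 = shiftedDet a b c d e f)
    (hA : denomBound a b c d e f ≤ A) (hN₁ : 0 ≤ longNum a b c d e f)
    (hN₂ : 0 ≤ shortNum a b c d e f) (hN₃ : 0 ≤ shortNum a c b d f e)
    (hm₁ : 0.6666 - 0.036 * (b + c) + 0.05 * d ≤ m₁) (hm₂ : 0.5 + 0.05 * a ≤ m₂)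
    (hm₃ : 0.5 + 0.05 * a ≤ m₃) :
    D * (δoct * √2 - 1) + (3 + 2 * √2) * D ^ 2 / A <
      3 / 4 * δoct * (longNum a b c d e f * m₁ + shortNum a b c d e f * m₂
        + shortNum a c b d f e * m₃) := by
  have hm₁_nonneg : 0 ≤ 0.6666 - 0.036 * (b + c) + 0.05 * d := by
    linarith [h.mem_b.2, h.mem_c.2, h.mem_d.1]
  have hm₂_nonneg : 0 ≤ 0.5 + 0.05 * a := by linarith [h.mem_a.1]
  have hcell : 0.5406 * (longNum a b c d e f * (0.6666 - 0.036 * (b + c) + 0.05 * d)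
      + shortNum a b c d e f * (0.5 + 0.05 * a) + shortNum a c b d f e * (0.5 + 0.05 * a)) ≤
      3 / 4 * δoct * (longNum a b c d e f * m₁ + shortNum a b c d e f * m₂
        + shortNum a c b d f e * m₃) := by
    have hδ : 0.5406 ≤ 3 / 4 * δoct := by linarith [lt_δoct]
    have hm₁' := hm₁_nonneg.trans hm₁
    have hm₂' := hm₂_nonneg.trans hm₂
    gcongr
  have hlinear : D * (δoct * √2 - 1) ≤ 0.001726 * D ^ 2 + 0.05522 :=
    calc D * (δoct * √2 - 1) ≤ D * 0.01952 := by
          gcongr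
          linarith [δoct_mul_sqrt_two_lt]
      _ ≤ 0.001726 * D ^ 2 + 0.05522 := by
          nlinarith only [sq_nonneg (0.0884 * D - 0.5), sq_nonneg D]
  have hquot : (3 + 2 * √2) * D ^ 2 / A ≤ 5.8285 * D ^ 2 / denomBound a b c d e f := by
    have := denomBound_pos h
    gcongr
    linarith [sqrt_two_mem_Ioo.2]
  have hcore := det_div_denomBound_lt_cellBound h hsum
  rw [← hD_sq] at hcore
  unfold cellBound at hcore
  rw [← hD_sq] at hcore
  linarith

lemma arctan_le_δoct_tangent {t : ℝ} (ht : 0 ≤ t) :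
    arctan t ≤ (δoct * √2 - 1 + (3 + 2 * √2) * t) / 6 := by
  have hsq : √2 ^ 2 = 2 := sq_sqrt (by norm_num)
  have hs : 0 < 3 - 2 * √2 := by linarith [sqrt_two_mem_Ioo.2]
  have hslope : (t - (3 - 2 * √2)) / (1 + (3 - 2 * √2) ^ 2) = ((3 + 2 * √2) * t - 1) / 6 := by
    rw [div_eq_div_iff (by positivity) (by norm_num)]
    linear_combination (t * (12 - 8 * √2) + 4) * hsq
  have htangent := arctan_le_tangent hs.le ht
  rw [hslope, arctan_three_sub_eq] at htangent
  linarith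

lemma eight_sub_sq_mem_Icc {y : ℝ} (hy : y ∈ Set.Icc 2.51 (2 * √2)) :
    8 - y ^ 2 ∈ Set.Icc (0 : ℝ) 1.7 := by
  have hle : y ^ 2 ≤ (2 * √2) ^ 2 := pow_le_pow_left₀ (by linarith [hy.1]) hy.2 2
  rw [mul_pow, sq_sqrt (by norm_num)] at hle
  constructor <;> nlinarith [hy.1]

lemma sq_sub_four_mem_Icc {y : ℝ} (hy : y ∈ Set.Icc 2 2.51) :
    y ^ 2 - 4 ∈ Set.Icc (0 : ℝ) 2.301 := by
  constructor <;> nlinarith [hy.1, hy.2]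

lemma two_thirds_arctan_lt {y₁ y₂ y₃ y₄ y₅ y₆ p q r l₁ l₂ l₃ D : ℝ}
    (h₁ : y₁ ∈ Set.Icc 2.51 (2 * √2)) (h₂ : y₂ ∈ Set.Icc 2 2.51) (h₃ : y₃ ∈ Set.Icc 2 2.51)
    (h₄ : y₄ ∈ Set.Icc 2 2.51) (h₅ : y₅ ∈ Set.Icc 2 2.51) (h₆ : y₆ ∈ Set.Icc 2 2.51)
    (hsum : 12.24 + y₁ ^ 2 < y₂ ^ 2 + y₃ ^ 2 + y₄ ^ 2 + y₅ ^ 2 + y₆ ^ 2)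
    (hp : p = (y₁ ^ 2 + y₂ ^ 2 - y₆ ^ 2) / 2) (hq : q = (y₁ ^ 2 + y₃ ^ 2 - y₅ ^ 2) / 2)
    (hr : r = (y₂ ^ 2 + y₃ ^ 2 - y₄ ^ 2) / 2)
    (hD : 0 < D) (hD_sq : D ^ 2 = gramDet (y₁ ^ 2) (y₂ ^ 2) (y₃ ^ 2) p q r)
    (hl₁ : 0 ≤ l₁) (hl₂ : 0 ≤ l₂) (hl₃ : 0 ≤ l₃)
    (hN₁ : cramerNum (y₁ ^ 2) (y₂ ^ 2) (y₃ ^ 2) p q r = D ^ 2 * l₁)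
    (hN₂ : cramerNum (y₂ ^ 2) (y₁ ^ 2) (y₃ ^ 2) p r q = D ^ 2 * l₂)
    (hN₃ : cramerNum (y₃ ^ 2) (y₁ ^ 2) (y₂ ^ 2) q r p = D ^ 2 * l₃) :
    2 / 3 * arctan (D / (y₁ * y₂ * y₃ + y₁ * r + y₂ * q + y₃ * p)) <
      δoct * (D / 12 * (l₁ * faceSum (y₂ ^ 2) (y₃ ^ 2) r + l₂ * faceSum (y₁ ^ 2) (y₃ ^ 2) q
        + l₃ * faceSum (y₁ ^ 2) (y₂ ^ 2) p)) := by
  have hbox : EdgeBox (8 - y₁ ^ 2) (y₂ ^ 2 - 4) (y₃ ^ 2 - 4) (y₄ ^ 2 - 4) (y₅ ^ 2 - 4)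
      (y₆ ^ 2 - 4) :=
    ⟨eight_sub_sq_mem_Icc h₁, sq_sub_four_mem_Icc h₂, sq_sub_four_mem_Icc h₃,
      sq_sub_four_mem_Icc h₄, sq_sub_four_mem_Icc h₅, sq_sub_four_mem_Icc h₆⟩
  have hy₁ : 0 ≤ y₁ := by linarith [h₁.1]
  have hy₂ : 0 ≤ y₂ := by linarith [h₂.1]
  have hy₃ : 0 ≤ y₃ := by linarith [h₃.1]
  have hA := denomBound_le hbox hy₁ hy₂ hy₃ (by ring) (by ring) (by ring)
  have hm₁ := le_faceSum_of_short hbox.mem_b hbox.mem_c hbox.mem_d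
  have hm₂ := le_faceSum_of_long hbox.mem_a hbox.mem_c hbox.mem_e
  have hm₃ := le_faceSum_of_long hbox.mem_a hbox.mem_b hbox.mem_f
  have hx₁ : 8 - (8 - y₁ ^ 2) = y₁ ^ 2 := by ring
  have hx (y : ℝ) : 4 + (y ^ 2 - 4) = y ^ 2 := by ring
  have hgp : (y₁ ^ 2 + (y₂ ^ 2 - 4) - (y₆ ^ 2 - 4)) / 2 = p := by rw [hp]; ring
  have hgq : (y₁ ^ 2 + (y₃ ^ 2 - 4) - (y₅ ^ 2 - 4)) / 2 = q := by rw [hq]; ring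
  have hgr : (y₂ ^ 2 + (y₃ ^ 2 - 4) - (y₄ ^ 2 - 4)) / 2 = r := by rw [hr]; ring
  have hgr' : (y₃ ^ 2 + (y₂ ^ 2 - 4) - (y₄ ^ 2 - 4)) / 2 = r := by rw [hr]; ring
  have hmain := half_angle_estimate (A := y₁ * y₂ * y₃ + y₁ * r + y₂ * q + y₃ * p)
    (m₁ := faceSum (y₂ ^ 2) (y₃ ^ 2) r) (m₂ := faceSum (y₁ ^ 2) (y₃ ^ 2) q)
    (m₃ := faceSum (y₁ ^ 2) (y₂ ^ 2) p) hbox (by linarith) hD.le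
  simp only [shiftedDet, longNum, shortNum, hx₁, hx, hgp, hgq, hgr, hgr', hN₁, hN₂, hN₃]
    at hA hm₁ hm₂ hm₃ hmain
  have hA_pos := (denomBound_pos hbox).trans_le hA
  have hestimate := hmain hD_sq hA (by positivity) (by positivity) (by positivity) hm₁ hm₂ hm₃
  have htangent := arctan_le_δoct_tangent (div_nonneg hD.le hA_pos.le)
  refine lt_of_mul_lt_mul_right ?_ (by positivity : 0 ≤ 9 * D)
  calc _ ≤ 2 / 3 * ((δoct * √2 - 1 + (3 + 2 * √2)
          * (D / (y₁ * y₂ * y₃ + y₁ * r + y₂ * q + y₃ * p))) / 6) * (9 * D) := by gcongr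
    _ = D * (δoct * √2 - 1)
          + (3 + 2 * √2) * D ^ 2 / (y₁ * y₂ * y₃ + y₁ * r + y₂ * q + y₃ * p) := by ring
    _ < _ := hestimate
    _ = _ := by ring

end EdgeEstimate

section Wedge

lemma setLIntegral_radial_sector {g : ℝ → ENNReal} (hg : Measurable g) {P : Set (ℝ × ℝ)}
    (hP : MeasurableSet P) {Θ : Set ℝ} (hΘ : MeasurableSet Θ)
    (h : ∀ p ∈ polarCoord.target, polarCoord.symm p ∈ P ↔ p.2 ∈ Θ) :
    ∫⁻ q in P, g (q.1 ^ 2 + q.2 ^ 2) =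
      (∫⁻ r in Set.Ioi 0, ENNReal.ofReal r * g (r ^ 2)) * volume (Θ ∩ Set.Ioo (-π) π) := by
  have hpolar : ∀ p ∈ polarCoord.target, ENNReal.ofReal p.1 •
      P.indicator (fun q => g (q.1 ^ 2 + q.2 ^ 2)) (polarCoord.symm p) =
        ENNReal.ofReal p.1 * g (p.1 ^ 2) * Θ.indicator 1 p.2 := by
    intro p hp
    have hsq : (p.1 * cos p.2) ^ 2 + (p.1 * sin p.2) ^ 2 = p.1 ^ 2 := by
      linear_combination p.1 ^ 2 * sin_sq_add_cos_sq p.2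
    by_cases hpΘ : p.2 ∈ Θ
    · rw [Set.indicator_of_mem ((h p hp).2 hpΘ), Set.indicator_of_mem hpΘ]
      simp only [polarCoord_symm_apply, hsq, smul_eq_mul, Pi.one_apply, mul_one]
    · rw [Set.indicator_of_notMem (mt (h p hp).1 hpΘ), Set.indicator_of_notMem hpΘ, smul_zero,
        mul_zero]
  rw [← lintegral_indicator hP, ← lintegral_comp_polarCoord_symm,
    setLIntegral_congr_fun polarCoord.open_target.measurableSet hpolar, polarCoord_target,
    Measure.volume_eq_prod, ← Measure.prod_restrict,
    lintegral_prod_mul (f := fun r : ℝ => ENNReal.ofReal r * g (r ^ 2)) (g := Θ.indicator 1)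
      (by fun_prop) (measurable_one.indicator hΘ).aemeasurable,
    lintegral_indicator_one hΘ, Measure.restrict_apply hΘ]

lemma volume_closedBall_inter_prod (b : OrthonormalBasis (Fin 3) ℝ E3) {P : Set (ℝ × ℝ)}
    (hP : MeasurableSet P) :
    volume (Metric.closedBall 0 1 ∩ {x | (b.repr x 0, b.repr x 1) ∈ P}) =
      ∫⁻ q in P, volume {z : ℝ | z ^ 2 + (q.1 ^ 2 + q.2 ^ 2) ≤ 1} := by
  have hball : MeasurableSet {w : ℝ × ℝ × ℝ | w.1 ^ 2 + (w.2.1 ^ 2 + w.2.2 ^ 2) ≤ 1} :=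
    measurableSet_le (by fun_prop) (by fun_prop)
  have hpreserving := ((MeasurePreserving.id volume).prod (volume_preserving_finTwoArrow ℝ)).comp
    ((volume_preserving_piFinSuccAbove (fun _ : Fin 3 => ℝ) 2).comp
      ((PiLp.volume_preserving_ofLp (Fin 3)).comp b.measurePreserving_repr))
  have hpreimage : Metric.closedBall 0 1 ∩ {x | (b.repr x 0, b.repr x 1) ∈ P} = (fun x : E3 =>
      (b.repr x 2, b.repr x 0, b.repr x 1)) ⁻¹'
        ({w | w.1 ^ 2 + (w.2.1 ^ 2 + w.2.2 ^ 2) ≤ 1} ∩ Prod.snd ⁻¹' P) := by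
    ext x
    have hnorm : ‖x‖ ≤ 1 ↔ b.repr x 2 ^ 2 + (b.repr x 0 ^ 2 + b.repr x 1 ^ 2) ≤ 1 := by
      rw [← b.repr.norm_map x, EuclideanSpace.norm_eq, Fin.sum_univ_three, Real.sqrt_le_one]
      simp only [Real.norm_eq_abs, sq_abs]
      rw [add_comm]
    simp only [Set.mem_inter_iff, mem_closedBall_zero_iff, hnorm, Set.mem_preimage,
      Set.mem_ofPred_eq]
  rw [hpreimage]
  refine (hpreserving.measure_preimage
    (hball.inter (measurable_snd hP)).nullMeasurableSet).trans ?_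
  rw [← Set.univ_prod, ← Measure.restrict_apply hball, Measure.volume_eq_prod,
    ← Measure.prod_restrict, Measure.restrict_univ, Measure.prod_apply_symm hball]
  rfl

lemma volume_closedBall_inter_sector (b : OrthonormalBasis (Fin 3) ℝ E3) {P : Set (ℝ × ℝ)}
    (hP : MeasurableSet P) {Θ : Set ℝ} (hΘ : MeasurableSet Θ)
    (h : ∀ p ∈ polarCoord.target, polarCoord.symm p ∈ P ↔ p.2 ∈ Θ) :
    volume (Metric.closedBall 0 1 ∩ {x | (b.repr x 0, b.repr x 1) ∈ P}) =
      ENNReal.ofReal (2 / 3) * volume (Θ ∩ Set.Ioo (-π) π) := by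
  have hdisc : MeasurableSet {w : ℝ × ℝ | w.1 ^ 2 + w.2 ≤ 1} :=
    measurableSet_le (by fun_prop) (by fun_prop)
  have hg : Measurable fun s : ℝ => volume {z : ℝ | z ^ 2 + s ≤ 1} :=
    measurable_measure_prodMk_right hdisc
  have hball := volume_closedBall_inter_prod b MeasurableSet.univ
  rw [setLIntegral_radial_sector hg MeasurableSet.univ MeasurableSet.univ (by simp)] at hball
  simp only [Set.mem_univ, Set.ofPred_true, Set.inter_univ, Set.univ_inter, Real.volume_Ioo,
    EuclideanSpace.volume_closedBall_fin_three, ENNReal.ofReal_one, one_pow, one_mul] at hball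
  have hsplit : ENNReal.ofReal (π * 4 / 3) = ENNReal.ofReal (2 / 3) * ENNReal.ofReal (π - -π) := by
    rw [← ENNReal.ofReal_mul (by norm_num)]
    ring_nf
  have hangle : ENNReal.ofReal (π - -π) ≠ 0 := (ENNReal.ofReal_pos.2 (by linarith [pi_pos])).ne'
  rw [volume_closedBall_inter_prod b hP, setLIntegral_radial_sector hg hP hΘ h,
    (ENNReal.mul_left_inj hangle ENNReal.ofReal_ne_top).1 (hball.symm.trans hsplit)]

lemma volume_angular_lune {φ : ℝ} (hφ : |φ| ≤ π) :
    volume ({θ : ℝ | 0 < cos θ ∧ 0 < cos (θ - φ)} ∩ Set.Ioo (-π) π) =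
      ENNReal.ofReal (π - |φ|) := by
  have hcos {x : ℝ} (hx : |x| < 3 * π / 2) : 0 < cos x ↔ |x| < π / 2 := by
    rw [← cos_abs]
    refine ⟨fun hpos => ?_, fun h => cos_pos_of_mem_Ioo ⟨by linarith [abs_nonneg x, pi_pos], h⟩⟩
    by_contra! h
    exact hpos.not_ge (cos_nonpos_of_pi_div_two_le_of_le h (by linarith))
  have hset : {θ : ℝ | 0 < cos θ ∧ 0 < cos (θ - φ)} ∩ Set.Ioo (-π) π =
      Metric.ball 0 (π / 2) ∩ Metric.ball φ (π / 2) := by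
    ext θ
    simp only [Set.mem_inter_iff, Set.mem_ofPred_eq, Set.mem_Ioo, Metric.mem_ball, Real.dist_eq,
      sub_zero, ← abs_lt]
    constructor
    · rintro ⟨⟨hcosθ, hcosφ⟩, hθ⟩
      have hθ' := (hcos (by linarith [pi_pos])).1 hcosθ
      exact ⟨hθ', (hcos (by linarith [abs_sub θ φ])).1 hcosφ⟩
    · rintro ⟨hθ, hθφ⟩
      exact ⟨⟨(hcos (by linarith [pi_pos])).2 hθ, (hcos (by linarith [pi_pos])).2 hθφ⟩,
        by linarith [pi_pos]⟩
  rw [hset, Real.ball_eq_Ioo, Real.ball_eq_Ioo, Set.Ioo_inter_Ioo, Real.volume_Ioo]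
  congr 1
  rcases le_total 0 φ with hφ | hφ
  · rw [abs_of_nonneg hφ, sup_of_le_right (by linarith), inf_of_le_left (by linarith)]
    ring
  · rw [abs_of_nonpos hφ, sup_of_le_left (by linarith), inf_of_le_right (by linarith)]
    ring

lemma exists_orthonormalBasis_of_pair {u : E3} (hu : u ≠ 0) (v : E3) :
    ∃ b : OrthonormalBasis (Fin 3) ℝ E3, ‖u‖ • b 0 = u ∧ inner ℝ (b 2) v = 0 := by
  have hcard : Module.finrank ℝ E3 = Fintype.card (Fin 3) := by simp
  have hfirst : InnerProductSpace.gramSchmidtNormed ℝ ![u, v, 0] 0 = ‖u‖⁻¹ • u := by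
    simp only [InnerProductSpace.gramSchmidtNormed]
    rw [show (0 : Fin 3) = ⊥ from rfl, InnerProductSpace.gramSchmidt_bot]
    rfl
  refine ⟨InnerProductSpace.gramSchmidtOrthonormalBasis hcard ![u, v, 0], ?_,
    InnerProductSpace.gramSchmidtOrthonormalBasis_inv_triangular hcard ![u, v, 0] (i := 1) (j := 2)
      (by decide)⟩
  rw [InnerProductSpace.gramSchmidtOrthonormalBasis_apply hcard (by simp [hfirst, hu]), hfirst,
    smul_inv_smul₀ (norm_ne_zero_iff.2 hu)]

open InnerProductGeometry in
lemma exists_orthonormalBasis_inner_eq {u v : E3} (hu : u ≠ 0) (hv : v ≠ 0) :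
    ∃ (b : OrthonormalBasis (Fin 3) ℝ E3) (φ : ℝ), |φ| = angle u v ∧
      (∀ x, inner ℝ u x = ‖u‖ * b.repr x 0) ∧
      ∀ x, inner ℝ v x = ‖v‖ * (cos φ * b.repr x 0 + sin φ * b.repr x 1) := by
  obtain ⟨b, hbu, hbv⟩ := exists_orthonormalBasis_of_pair hu v
  obtain ⟨w, hre, him⟩ : ∃ w : ℂ, w.re = inner ℝ (b 0) v ∧ w.im = inner ℝ (b 1) v :=
    ⟨⟨_, _⟩, rfl, rfl⟩
  have hinner_u (x : E3) : inner ℝ u x = ‖u‖ * b.repr x 0 := by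
    rw [b.repr_apply_apply, ← real_inner_smul_left, hbu]
  have hinner_v (x : E3) : inner ℝ v x = w.re * b.repr x 0 + w.im * b.repr x 1 := by
    rw [← b.sum_inner_mul_inner v x, Fin.sum_univ_three, real_inner_comm, real_inner_comm (b 1),
      real_inner_comm (b 2) v, hbv, zero_mul, add_zero, hre, him, b.repr_apply_apply,
      b.repr_apply_apply]
  have hnorm : ‖w‖ = ‖v‖ := by
    rw [← sq_eq_sq₀ (norm_nonneg _) (norm_nonneg _), ← real_inner_self_eq_norm_sq v, hinner_v,
      b.repr_apply_apply, b.repr_apply_apply, ← hre, ← him, Complex.sq_norm, Complex.normSq_apply]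
  have hw : w ≠ 0 := norm_ne_zero_iff.1 (hnorm ▸ norm_ne_zero_iff.2 hv)
  refine ⟨b, w.arg, ?_, hinner_u, fun x => ?_⟩
  · rw [angle, hinner_u, b.repr_apply_apply, ← hnorm, mul_div_mul_left _ _ (norm_ne_zero_iff.2 hu),
      ← hre, ← Complex.cos_arg hw, ← cos_abs, arccos_cos (abs_nonneg _) (Complex.abs_arg_le_pi w)]
  · rw [hinner_v, ← hnorm, ← Complex.norm_mul_cos_arg w, ← Complex.norm_mul_sin_arg w]
    ring

open InnerProductGeometry in
lemma volume_closedBall_inter_wedge {u v : E3} (hu : u ≠ 0) (hv : v ≠ 0) :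
    volume (Metric.closedBall 0 1 ∩ {x | 0 < inner ℝ u x ∧ 0 < inner ℝ v x}) =
      ENNReal.ofReal (2 / 3 * (π - angle u v)) := by
  obtain ⟨b, φ, hφ, hinner_u, hinner_v⟩ := exists_orthonormalBasis_inner_eq hu hv
  have hu_pos : 0 < ‖u‖ := norm_pos_iff.2 hu
  have hv_pos : 0 < ‖v‖ := norm_pos_iff.2 hv
  set P : Set (ℝ × ℝ) := {q | 0 < ‖u‖ * q.1} ∩ {q | 0 < ‖v‖ * (cos φ * q.1 + sin φ * q.2)} with hP
  set Θ : Set ℝ := {θ | 0 < cos θ} ∩ {θ | 0 < cos (θ - φ)} with hΘ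
  have hsector : ∀ p ∈ polarCoord.target, polarCoord.symm p ∈ P ↔ p.2 ∈ Θ := by
    rintro ⟨r, θ⟩ hp
    have hr : 0 < r := hp.1
    have hcos : cos φ * (r * cos θ) + sin φ * (r * sin θ) = r * cos (θ - φ) := by
      rw [cos_sub]
      ring
    simp only [hP, hΘ, polarCoord_symm_apply, Set.mem_inter_iff, Set.mem_ofPred_eq, hcos,
      mul_pos_iff_of_pos_left hu_pos, mul_pos_iff_of_pos_left hv_pos, mul_pos_iff_of_pos_left hr]
  have hvolume := volume_closedBall_inter_sector b
    ((measurableSet_lt measurable_const (by fun_prop)).inter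
      (measurableSet_lt measurable_const (by fun_prop)))
    ((measurableSet_lt measurable_const (by fun_prop)).inter
      (measurableSet_lt measurable_const (by fun_prop))) hsector
  rw [ENNReal.ofReal_mul (by norm_num), ← hφ, ← volume_angular_lune (hφ ▸ angle_le_pi u v)]
  simp only [hinner_u, hinner_v]
  exact hvolume

end Wedge

section SolidAngle

/-- Girard's inequality for half-spaces `H₁`, `H₂`, `H₃`: up to sign almost every point lies in at
least two of them. -/
lemma measureReal_univ_add_le {G : Type*} [InvolutiveNeg G] [MeasurableSpace G] [MeasurableNeg G]
    {μ : Measure G} [IsFiniteMeasure μ] [μ.IsNegInvariant] {H₁ H₂ H₃ : Set G}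
    (hm₁ : MeasurableSet H₁) (hm₂ : MeasurableSet H₂) (hm₃ : MeasurableSet H₃)
    (h₁ : ∀ᵐ x ∂μ, x ∈ H₁ ∨ -x ∈ H₁) (h₂ : ∀ᵐ x ∂μ, x ∈ H₂ ∨ -x ∈ H₂)
    (h₃ : ∀ᵐ x ∂μ, x ∈ H₃ ∨ -x ∈ H₃) :
    μ.real Set.univ + 4 * μ.real (H₁ ∩ H₂ ∩ H₃) ≤
      2 * (μ.real (H₁ ∩ H₂) + μ.real (H₁ ∩ H₃) + μ.real (H₂ ∩ H₃)) := by
  set M := H₁ ∩ H₂ ∪ H₁ ∩ H₃ ∪ H₂ ∩ H₃ with hM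
  have hcover : (Set.univ : Set G) ≤ᵐ[μ] (M ∪ -M : Set G) := by
    filter_upwards [h₁, h₂, h₃] with x h₁ h₂ h₃ _
    change x ∈ M ∪ -M
    simp only [hM, Set.mem_union, Set.mem_inter_iff, Set.mem_neg]
    tauto
  have hle : μ.real Set.univ ≤ 2 * μ.real M :=
    calc μ.real Set.univ ≤ μ.real (M ∪ -M) :=
          ENNReal.toReal_mono (measure_ne_top μ _) (measure_mono_ae hcover)
      _ ≤ μ.real M + μ.real (-M) := measureReal_union_le _ _
      _ = 2 * μ.real M := by rw [measureReal_def, measureReal_def, Measure.measure_neg, two_mul]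
  have hunion₁ := measureReal_union_add_inter (μ := μ) (s := H₁ ∩ H₂) (hm₁.inter hm₃)
  have hunion₂ := measureReal_union_add_inter (μ := μ) (s := H₁ ∩ H₂ ∪ H₁ ∩ H₃) (hm₂.inter hm₃)
  have hinter₁ : H₁ ∩ H₂ ∩ (H₁ ∩ H₃) = H₁ ∩ H₂ ∩ H₃ := by
    ext x
    simp only [Set.mem_inter_iff]
    tauto
  have hinter₂ : (H₁ ∩ H₂ ∪ H₁ ∩ H₃) ∩ (H₂ ∩ H₃) = H₁ ∩ H₂ ∩ H₃ := by
    ext x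
    simp only [Set.mem_inter_iff, Set.mem_union]
    tauto
  rw [hinter₁] at hunion₁
  rw [hinter₂, ← hM] at hunion₂
  linarith

lemma isNegInvariant_restrict {G : Type*} [InvolutiveNeg G] [MeasurableSpace G] [MeasurableNeg G]
    {μ : Measure G} [μ.IsNegInvariant] {s : Set G} (hs : -s = s) :
    (μ.restrict s).IsNegInvariant := by
  have hpreserving := (Measure.measurePreserving_neg μ).restrict_preimage_emb
    (MeasurableEquiv.neg G).measurableEmbedding s
  rw [Set.neg_preimage, hs] at hpreserving
  exact ⟨hpreserving.map_eq⟩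

lemma ae_inner_ne_zero {E : Type*} [NormedAddCommGroup E] [InnerProductSpace ℝ E]
    [FiniteDimensional ℝ E] [MeasurableSpace E] [BorelSpace E] (μ : Measure E)
    [μ.IsAddHaarMeasure] {n : E} (hn : n ≠ 0) : ∀ᵐ x ∂μ, inner ℝ n x ≠ 0 := by
  have hker : (innerSL ℝ n).ker ≠ ⊤ := by
    rw [Ne, LinearMap.ker_eq_top]
    intro h
    exact hn (by simpa using LinearMap.congr_fun h n)
  rw [ae_iff]
  convert Measure.addHaar_submodule μ _ hker using 2
  ext x
  simp

open InnerProductGeometry in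
lemma volume_closedBall_inter_trihedral_le {n₁ n₂ n₃ : E3} (h₁ : n₁ ≠ 0) (h₂ : n₂ ≠ 0)
    (h₃ : n₃ ≠ 0) :
    volume.real (Metric.closedBall 0 1 ∩
        {x | 0 < inner ℝ n₁ x ∧ 0 < inner ℝ n₂ x ∧ 0 < inner ℝ n₃ x}) ≤
      ((π - angle n₁ n₂) + (π - angle n₁ n₃) + (π - angle n₂ n₃) - π) / 3 := by
  set B : Set E3 := Metric.closedBall 0 1 with hB
  have : IsFiniteMeasure (volume.restrict B) :=
    isFiniteMeasure_restrict.2 measure_closedBall_lt_top.ne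
  have : (volume.restrict B).IsNegInvariant := isNegInvariant_restrict (by simp [hB])
  have hmeas (n : E3) : MeasurableSet {x : E3 | 0 < inner ℝ n x} :=
    measurableSet_lt measurable_const (by fun_prop)
  have hcover {n : E3} (hn : n ≠ 0) : ∀ᵐ x ∂volume.restrict B,
      x ∈ {x : E3 | 0 < inner ℝ n x} ∨ -x ∈ {x : E3 | 0 < inner ℝ n x} := by
    filter_upwards [ae_restrict_of_ae (ae_inner_ne_zero volume hn)] with x hx
    simpa [inner_neg_right] using hx.lt_or_gt.symm
  have hball : volume.real B = 4 * π / 3 := by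
    rw [measureReal_def, EuclideanSpace.volume_closedBall_fin_three, ENNReal.ofReal_one, one_pow,
      one_mul, ENNReal.toReal_ofReal (by positivity), mul_comm]
  have hwedge {u v : E3} (hu : u ≠ 0) (hv : v ≠ 0) : (volume.restrict B).real
      ({x : E3 | 0 < inner ℝ u x} ∩ {x : E3 | 0 < inner ℝ v x}) = 2 / 3 * (π - angle u v) := by
    rw [measureReal_restrict_apply ((hmeas u).inter (hmeas v)), Set.inter_comm, measureReal_def]
    refine (congrArg ENNReal.toReal (volume_closedBall_inter_wedge hu hv)).trans ?_
    exact ENNReal.toReal_ofReal (by linarith [angle_le_pi u v])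
  have hgirard := measureReal_univ_add_le (hmeas n₁) (hmeas n₂) (hmeas n₃) (hcover h₁) (hcover h₂)
    (hcover h₃)
  rw [hwedge h₁ h₂, hwedge h₁ h₃, hwedge h₂ h₃, measureReal_restrict_apply .univ,
    measureReal_restrict_apply (((hmeas n₁).inter (hmeas n₂)).inter (hmeas n₃)), Set.univ_inter,
    hball, Set.inter_comm _ B, Set.inter_assoc] at hgirard
  simp only [Set.ofPred_and]
  linarith

/-- The cross product on `E3`. -/
def cross (u v : E3) : E3 := WithLp.toLp 2 (crossProduct u.ofLp v.ofLp)

/-- The scalar triple product, i.e. the signed volume of the parallelepiped spanned by three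
vectors. -/
def triple (u v w : E3) : ℝ := inner ℝ (cross u v) w

lemma triple_eq (u v w : E3) : triple u v w = u 0 * v 1 * w 2 - u 0 * v 2 * w 1 - u 1 * v 0 * w 2
    + u 1 * v 2 * w 0 + u 2 * v 0 * w 1 - u 2 * v 1 * w 0 := by
  simp only [triple, cross, cross_apply, Nat.succ_eq_add_one, Nat.reduceAdd, Fin.isValue,
    PiLp.inner_apply, RCLike.inner_apply, ringHom_apply, Fin.sum_univ_three, Matrix.cons_val_zero,
    Matrix.cons_val_one, Matrix.cons_val]
  ring

lemma triple_rotate (u v w : E3) : triple v w u = triple u v w := by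
  rw [triple_eq, triple_eq]
  ring

lemma inner_cross_left (u v : E3) : inner ℝ (cross u v) u = 0 := by
  have := triple_eq u v u
  rw [triple] at this
  rw [this]
  ring

lemma inner_cross_right (u v : E3) : inner ℝ (cross u v) v = 0 := by
  have := triple_eq u v v
  rw [triple] at this
  rw [this]
  ring

lemma inner_cross_cross (u v w x : E3) : inner ℝ (cross u v) (cross w x) =
    inner ℝ u w * inner ℝ v x - inner ℝ u x * inner ℝ v w := by
  have := cross_dot_cross w.ofLp x.ofLp u.ofLp v.ofLp
  simp only [EuclideanSpace.inner_eq_star_dotProduct, cross, star_trivial]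
  linarith

lemma triple_sq (u v w : E3) : triple u v w ^ 2 = gramDet (‖u‖ ^ 2) (‖v‖ ^ 2) (‖w‖ ^ 2)
    (inner ℝ u v) (inner ℝ u w) (inner ℝ v w) := by
  rw [triple_eq, gramDet]
  simp only [← real_inner_self_eq_norm_sq, PiLp.inner_apply, Fin.sum_univ_three,
    RCLike.inner_apply, conj_trivial]
  ring

open InnerProductGeometry in
lemma pi_sub_angle_cross {u v w : E3} (h : triple u v w ≠ 0) :
    π - angle (cross v w) (cross w u) = Complex.arg
      ⟨‖w‖ ^ 2 * inner ℝ u v - inner ℝ u w * inner ℝ v w, ‖w‖ * |triple u v w|⟩ := by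
  set z : ℂ := ⟨‖w‖ ^ 2 * inner ℝ u v - inner ℝ u w * inner ℝ v w, ‖w‖ * |triple u v w|⟩ with hz
  have hw : 0 < ‖w‖ := norm_pos_iff.2 fun h0 => h (by simp [triple, h0])
  have him : 0 < z.im := mul_pos hw (abs_pos.2 h)
  have hz0 : z ≠ 0 := fun h0 => him.ne' (congrArg Complex.im h0)
  have hinner : inner ℝ (cross v w) (cross w u) = -z.re := by
    rw [inner_cross_cross, real_inner_comm u w, real_inner_comm u v, real_inner_self_eq_norm_sq]
    ring
  have hnorm : ‖cross v w‖ * ‖cross w u‖ = ‖z‖ := by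
    rw [← sq_eq_sq₀ (by positivity) (norm_nonneg z), mul_pow, Complex.sq_norm,
      Complex.normSq_apply, ← real_inner_self_eq_norm_sq, ← real_inner_self_eq_norm_sq,
      inner_cross_cross, inner_cross_cross]
    simp only [real_inner_self_eq_norm_sq, real_inner_comm v w, real_inner_comm u w, hz]
    have hsq := (sq_abs (triple u v w)).trans (triple_sq u v w)
    rw [gramDet] at hsq
    linear_combination -‖w‖ ^ 2 * hsq
  rw [angle, hinner, hnorm, neg_div, arccos_neg, sub_sub_cancel,
    Complex.arg_of_im_nonneg_of_ne_zero him.le hz0]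

lemma inner_lt_norm_mul_norm {u v w : E3} (h : triple u v w ≠ 0) : inner ℝ u v < ‖u‖ * ‖v‖ := by
  have hcross : cross u v ≠ 0 := fun h0 => h (by rw [triple, h0, inner_zero_left])
  have hsq := real_inner_self_pos.2 hcross
  rw [inner_cross_cross, real_inner_self_eq_norm_sq, real_inner_self_eq_norm_sq,
    real_inner_comm u v] at hsq
  exact (abs_lt_of_sq_lt_sq' (by linarith) (by positivity)).2

lemma arg_add_arg_add_arg {z₁ z₂ z₃ w : ℂ} {k : ℝ} (hk : 0 < k) (h₁ : 0 < z₁.im) (h₂ : 0 < z₂.im)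
    (h₃ : 0 < z₃.im) (hre : 0 < w.re) (him : 0 < w.im) (h : z₁ * z₂ * z₃ = -(k * w ^ 2)) :
    z₁.arg + z₂.arg + z₃.arg = π + 2 * w.arg := by
  have hne {z : ℂ} (hz : 0 < z.im) : z ≠ 0 := fun h0 => hz.ne' (congrArg Complex.im h0)
  have hpos {z : ℂ} (hz : 0 < z.im) : 0 < z.arg :=
    (Complex.arg_nonneg_iff.2 hz.le).lt_of_ne' fun h0 => hz.ne' (Complex.arg_eq_zero_iff.1 h0).2
  have hlt {z : ℂ} (hz : 0 < z.im) : z.arg < π := Complex.arg_lt_pi_iff.2 (.inr hz.ne')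
  have hw : w.arg < π / 2 := (abs_lt.1 (Complex.abs_arg_lt_pi_div_two_iff.2 (.inl hre))).2
  have hk0 : (k : ℂ) * w ^ 2 ≠ 0 := by
    simp [hk.ne', hne him]
  have hangle : ((z₁.arg + z₂.arg + z₃.arg : ℝ) : Real.Angle) = (π + 2 * w.arg : ℝ) := by
    have := congrArg (fun z : ℂ => (z.arg : Real.Angle)) h
    simp only [Complex.arg_mul_coe_angle (mul_ne_zero (hne h₁) (hne h₂)) (hne h₃),
      Complex.arg_mul_coe_angle (hne h₁) (hne h₂), Complex.arg_neg_coe_angle hk0,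
      Complex.arg_real_mul _ hk, Complex.arg_pow_coe_angle] at this
    simp only [two_mul, Real.Angle.coe_add, this, two_smul]
    abel
  obtain ⟨n, hn⟩ := Real.Angle.angle_eq_iff_two_pi_dvd_sub.1 hangle
  have hn_lt : (n : ℝ) < 1 := by
    nlinarith [hlt h₁, hlt h₂, hlt h₃, hpos him, pi_pos]
  have hn_gt : (-1 : ℝ) < n := by
    nlinarith [hpos h₁, hpos h₂, hpos h₃, pi_pos]
  have hn0 : n = 0 := by
    have : n < 1 := by exact_mod_cast hn_lt
    have : -1 < n := by exact_mod_cast hn_gt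
    lia
  rw [hn0, Int.cast_zero, mul_zero] at hn
  linarith

lemma arg_eq_arctan {z : ℂ} (hz : 0 < z.re) : z.arg = arctan (z.im / z.re) := by
  rw [← Complex.tan_arg, arctan_tan]
  all_goals linarith [abs_lt.1 (Complex.abs_arg_lt_pi_div_two_iff.2 (.inl hz))]

/-- The identity behind the solid angle formula `tan (Ω / 2) = D / A`. -/
lemma dihedral_product_eq {y₁ y₂ y₃ p q r D : ℝ}
    (hD : D ^ 2 = gramDet (y₁ ^ 2) (y₂ ^ 2) (y₃ ^ 2) p q r) :
    (⟨y₁ ^ 2 * r - p * q, y₁ * D⟩ : ℂ) * ⟨y₂ ^ 2 * q - p * r, y₂ * D⟩ *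
        ⟨y₃ ^ 2 * p - q * r, y₃ * D⟩ =
      -(((y₁ * y₂ - p) * (y₁ * y₃ - q) * (y₂ * y₃ - r) / 2 : ℝ) *
        (⟨y₁ * y₂ * y₃ + y₁ * r + y₂ * q + y₃ * p, D⟩ : ℂ) ^ 2) := by
  unfold gramDet at hD
  rw [sq (⟨_, _⟩ : ℂ)]
  apply Complex.ext
  all_goals
    simp only [Complex.mul_re, Complex.mul_im, Complex.neg_re, Complex.neg_im, Complex.ofReal_re,
      Complex.ofReal_im]
  · linear_combination (-((y₁ ^ 2 * r - p * q) * y₂ * y₃ + (y₂ ^ 2 * q - p * r) * y₁ * y₃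
      + (y₃ ^ 2 * p - q * r) * y₁ * y₂) - (y₁ * y₂ - p) * (y₁ * y₃ - q) * (y₂ * y₃ - r) / 2) * hD
  · linear_combination (-y₁ * y₂ * y₃ * D) * hD

/-- The denominator in Van Oosterom and Strackee's formula `tan (Ω / 2) = |det (u, v, w)| / A` for
the solid angle `Ω` spanned by three vectors. -/
def solidAngleDenom (u v w : E3) : ℝ :=
  ‖u‖ * ‖v‖ * ‖w‖ + ‖u‖ * inner ℝ v w + ‖v‖ * inner ℝ u w + ‖w‖ * inner ℝ u v

open InnerProductGeometry in
lemma sum_dihedral_sub_pi_eq {u v w : E3} (h : triple u v w ≠ 0) (hA : 0 < solidAngleDenom u v w) :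
    (π - angle (cross v w) (cross w u)) + (π - angle (cross v w) (cross u v))
        + (π - angle (cross w u) (cross u v)) - π =
      2 * arctan (|triple u v w| / solidAngleDenom u v w) := by
  have hvwu : triple v w u ≠ 0 := by rwa [triple_rotate]
  have hwuv : triple w u v ≠ 0 := by rwa [triple_rotate]
  have hD : 0 < |triple u v w| := abs_pos.2 h
  have hnorm (x y z : E3) (hxyz : triple x y z ≠ 0) : 0 < ‖x‖ * |triple u v w| :=
    mul_pos (norm_pos_iff.2 fun h0 => hxyz (by simp [triple_eq, h0])) hD
  have hpos : 0 < (‖u‖ * ‖v‖ - inner ℝ u v) * (‖u‖ * ‖w‖ - inner ℝ u w)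
      * (‖v‖ * ‖w‖ - inner ℝ v w) / 2 := by
    have huv := sub_pos.2 (inner_lt_norm_mul_norm h)
    have huw := sub_pos.2 (inner_lt_norm_mul_norm hwuv)
    have hvw := sub_pos.2 (inner_lt_norm_mul_norm hvwu)
    rw [real_inner_comm, mul_comm ‖w‖] at huw
    positivity
  have harg := arg_add_arg_add_arg hpos (hnorm u v w h) (hnorm v w u hvwu) (hnorm w u v hwuv) hA hD
    (dihedral_product_eq ((sq_abs _).trans (triple_sq u v w)))
  have harctan := arg_eq_arctan (z := ⟨solidAngleDenom u v w, |triple u v w|⟩) hA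
  rw [angle_comm (cross v w) (cross u v), pi_sub_angle_cross h, pi_sub_angle_cross hvwu,
    pi_sub_angle_cross hwuv, triple_rotate v w u, triple_rotate u v w, real_inner_comm u v,
    real_inner_comm u w, real_inner_comm v w, mul_comm (inner ℝ v w)]
  rw [solidAngleDenom] at harctan ⊢
  linarith

lemma volume_closedBall_inter_cone_le {u v w : E3} (h : triple u v w ≠ 0)
    (hA : 0 < solidAngleDenom u v w) :
    volume.real (Metric.closedBall 0 1 ∩
        {x | ∃ a b c : ℝ, 0 ≤ a ∧ 0 ≤ b ∧ 0 ≤ c ∧ x = a • u + b • v + c • w}) ≤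
      2 / 3 * arctan (|triple u v w| / solidAngleDenom u v w) := by
  set T := triple u v w
  have hcross (x y z : E3) (hxyz : triple x y z = T) : T • cross x y ≠ 0 :=
    smul_ne_zero h fun h0 => h (by rw [← hxyz, triple, h0, inner_zero_left])
  have hvw := hcross v w u (triple_rotate u v w)
  have hwu := hcross w u v ((triple_rotate v w u).trans (triple_rotate u v w))
  have huv := hcross u v w rfl
  have hinner {x y z : E3} (a b c : ℝ) (hc : 0 ≤ c) (hxyz : triple x y z = T) :
      0 ≤ inner ℝ (T • cross x y) (a • x + b • y + c • z) := by
    have htriple : inner ℝ (cross x y) z = T := hxyz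
    simp only [inner_add_right, real_inner_smul_left, real_inner_smul_right, inner_cross_left,
      inner_cross_right, htriple]
    nlinarith [mul_nonneg hc (mul_self_nonneg T)]
  have hbound := volume_closedBall_inter_trihedral_le hvw hwu huv
  simp only [InnerProductGeometry.angle_smul_smul h] at hbound
  rw [sum_dihedral_sub_pi_eq h hA] at hbound
  refine (ENNReal.toReal_mono ?_ (measure_mono_ae ?_)).trans (hbound.trans (by linarith))
  · exact ((measure_mono Set.inter_subset_left).trans_lt measure_closedBall_lt_top).ne
  filter_upwards [ae_inner_ne_zero volume hvw, ae_inner_ne_zero volume hwu,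
    ae_inner_ne_zero volume huv] with x hx₁ hx₂ hx₃ hx
  obtain ⟨hball, a, b, c, ha, hb, hc, rfl⟩ := hx
  refine ⟨hball, lt_of_le_of_ne' ?_ hx₁, lt_of_le_of_ne' ?_ hx₂, lt_of_le_of_ne' ?_ hx₃⟩
  · rw [add_rotate (a • u)]
    exact hinner b c a ha (triple_rotate u v w)
  · rw [← add_rotate (c • w)]
    exact hinner c a b hb ((triple_rotate v w u).trans (triple_rotate u v w))
  · exact hinner a b c hc rfl

end SolidAngle

section SimplexVolume

variable {ι : Type*} [Fintype ι]

lemma map_abs_volume : (volume : Measure ℝ).map abs = 2 • volume.restrict (Set.Ioi 0) := by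
  ext s hs
  have hcover : abs ⁻¹' s =ᵐ[volume] (s ∩ Set.Ioi 0 ∪ -(s ∩ Set.Ioi 0) : Set ℝ) := by
    filter_upwards [compl_mem_ae_iff.2 (measure_singleton (0 : ℝ))] with x hx
    obtain hx | hx := lt_or_gt_of_ne (Set.mem_compl_singleton_iff.1 hx)
    · apply propext
      change |x| ∈ s ↔ (x ∈ s ∧ 0 < x) ∨ (-x ∈ s ∧ 0 < -x)
      simp [abs_of_neg hx, hx, hx.le]
    · apply propext
      change |x| ∈ s ↔ (x ∈ s ∧ 0 < x) ∨ (-x ∈ s ∧ 0 < -x)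
      simp [abs_of_pos hx, hx, hx.le]
  have hdisj : Disjoint (s ∩ Set.Ioi 0) (-(s ∩ Set.Ioi 0)) :=
    Set.disjoint_left.2 fun x hx hx' => lt_asymm hx.2 (neg_pos.1 (Set.mem_Ioi.1 hx'.2))
  have hm : MeasurableSet (s ∩ Set.Ioi 0) := hs.inter measurableSet_Ioi
  rw [Measure.map_apply measurable_abs hs, measure_congr hcover, measure_union hdisj hm.neg,
    Measure.measure_neg, Measure.smul_apply, Measure.restrict_apply hs, two_nsmul]

lemma volume_setOf_pos_sum_lt_one :
    volume {t : ι → ℝ | (∀ i, 0 < t i) ∧ ∑ i, t i < 1} =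
      ENNReal.ofReal (1 / (Fintype.card ι).factorial) := by
  have hmeas : MeasurableSet {t : ι → ℝ | ∑ i, t i < 1} :=
    measurableSet_lt (by fun_prop) measurable_const
  have hball := volume_sum_rpow_lt_one ι (le_refl (1 : ℝ))
  have : SigmaFinite (2 • volume.restrict (Set.Ioi (0 : ℝ))) := by
    rw [two_nsmul]
    infer_instance
  have hsmul : Measure.pi (fun _ : ι => 2 • volume.restrict (Set.Ioi (0 : ℝ))) =
      2 ^ Fintype.card ι • volume.restrict (Set.univ.pi fun _ => Set.Ioi 0) := by
    refine Measure.pi_eq fun s _ => ?_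
    rw [volume_pi, Measure.restrict_pi_pi]
    simp [Finset.prod_mul_distrib, Measure.pi_pi]
  have hmap : (volume : Measure (ι → ℝ)).map (fun x i => |x i|) =
      2 ^ Fintype.card ι • volume.restrict (Set.univ.pi fun _ => Set.Ioi 0) := by
    have : SigmaFinite ((volume : Measure ℝ).map abs) := by rwa [map_abs_volume]
    rw [← hsmul, volume_pi, Measure.pi_map_pi fun _ => measurable_abs.aemeasurable, map_abs_volume]
  have hpos : {t : ι → ℝ | (∀ i, 0 < t i) ∧ ∑ i, t i < 1} =
      {t : ι → ℝ | ∑ i, t i < 1} ∩ Set.univ.pi fun _ => Set.Ioi 0 := by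
    ext t
    simp [and_comm]
  have hpre := congrArg (fun μ => μ {t : ι → ℝ | ∑ i, t i < 1}) hmap
  simp only [Measure.map_apply (f := fun (x : ι → ℝ) i => |x i|) (by fun_prop) hmeas,
    Measure.smul_apply, Measure.restrict_apply hmeas, ← hpos] at hpre
  simp only [rpow_one, div_one, one_add_one_eq_two, Real.Gamma_two, mul_one,
    Real.Gamma_nat_eq_factorial] at hball
  have hvol := hpre.symm.trans hball
  rw [nsmul_eq_mul, div_eq_mul_one_div, ENNReal.ofReal_mul (by positivity)] at hvol
  refine (ENNReal.mul_right_inj (by simp) (by finiteness)).1 (hvol.trans ?_)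
  simp

lemma volume_image_mulVec_setOf_pos_sum_lt_one [DecidableEq ι] (M : Matrix ι ι ℝ) :
    volume (M.mulVec '' {t : ι → ℝ | (∀ i, 0 < t i) ∧ ∑ i, t i < 1}) =
      ENNReal.ofReal (|M.det| / (Fintype.card ι).factorial) := by
  rw [← Matrix.coe_mulVecLin, Measure.addHaar_image_linearMap, volume_setOf_pos_sum_lt_one,
    ← ENNReal.ofReal_mul (abs_nonneg _), ← Matrix.toLin'_apply', LinearMap.det_toLin',
    mul_one_div]

end SimplexVolume

section FlagCone

/-- The open cone spanned by `l`, `c (σ 2)` and the basis vector `e (σ 0)`, where `c k` is supported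
off `k`. It is described by inequalities in order to make the disjointness for distinct `σ`
evident. -/
def flagCone (l : Fin 3 → ℝ) (c : Fin 3 → Fin 3 → ℝ) (σ : Equiv.Perm (Fin 3)) : Set (Fin 3 → ℝ) :=
  {s | (∀ i ≠ σ 2, l i * s (σ 2) < l (σ 2) * s i) ∧
    c (σ 2) (σ 0) * (l (σ 2) * s (σ 1) - l (σ 1) * s (σ 2)) <
      c (σ 2) (σ 1) * (l (σ 2) * s (σ 0) - l (σ 0) * s (σ 2))}

lemma measurableSet_flagCone (l : Fin 3 → ℝ) (c : Fin 3 → Fin 3 → ℝ) (σ : Equiv.Perm (Fin 3)) :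
    MeasurableSet (flagCone l c σ) := by
  simp only [flagCone, Set.ofPred_and, Set.ofPred_forall]
  refine .inter (.iInter fun i => .iInter fun _ => ?_) ?_
  all_goals exact measurableSet_lt (by fun_prop) (by fun_prop)

lemma pairwise_disjoint_flagCone (l : Fin 3 → ℝ) (c : Fin 3 → Fin 3 → ℝ) :
    Pairwise fun σ τ => Disjoint (flagCone l c σ) (flagCone l c τ) := by
  refine fun σ τ hne => Set.disjoint_left.2 fun s hσ hτ => ?_
  obtain h2 | h2 := eq_or_ne (σ 2) (τ 2)
  · have hswap : ∀ σ τ : Equiv.Perm (Fin 3), σ ≠ τ → σ 2 = τ 2 → τ 0 = σ 1 ∧ τ 1 = σ 0 := by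
      decide
    obtain ⟨h0, h1⟩ := hswap σ τ hne h2
    have := hτ.2
    rw [h0, h1, ← h2] at this
    exact lt_asymm hσ.2 this
  · exact lt_asymm (hσ.1 _ h2.symm) (hτ.1 _ h2)

lemma smul_add_smul_add_smul_mem_flagCone {l : Fin 3 → ℝ} {c : Fin 3 → Fin 3 → ℝ}
    {σ : Equiv.Perm (Fin 3)} (hl : 0 < l (σ 2)) (hc0 : 0 ≤ c (σ 2) (σ 0)) (hc : 0 < c (σ 2) (σ 1))
    (hcσ : c (σ 2) (σ 2) = 0) {x y z : ℝ} (hx : 0 < x) (hy : 0 < y) :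
    x • Pi.single (σ 0) (1 / 2) + y • c (σ 2) + z • l ∈ flagCone l c σ := by
  have h01 : σ 1 ≠ σ 0 := σ.injective.ne (by decide)
  have h02 : σ 2 ≠ σ 0 := σ.injective.ne (by decide)
  refine ⟨fun i hi => ?_, ?_⟩
  · obtain rfl | rfl : i = σ 0 ∨ i = σ 1 := by
      obtain ⟨j, rfl⟩ := σ.surjective i
      fin_cases j <;> simp_all
    · simp only [Fin.isValue, one_div, Pi.add_apply, Pi.smul_apply, ne_eq, h02, not_false_eq_true,
        Pi.single_eq_of_ne, smul_eq_mul, mul_zero, hcσ, add_zero, zero_add, Pi.single_eq_same]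
      nlinarith [mul_pos hl hx, mul_nonneg (mul_nonneg hl.le hc0) hy.le]
    · simp only [Fin.isValue, one_div, Pi.add_apply, Pi.smul_apply, ne_eq, h02, not_false_eq_true,
        Pi.single_eq_of_ne, smul_eq_mul, mul_zero, hcσ, add_zero, zero_add, h01]
      nlinarith [mul_pos (mul_pos hl hc) hy]
  · simp only [Fin.isValue, one_div, Pi.add_apply, Pi.smul_apply, ne_eq, h01, not_false_eq_true,
      Pi.single_eq_of_ne, smul_eq_mul, mul_zero, zero_add, h02, hcσ, add_zero, Pi.single_eq_same]
    nlinarith [mul_pos (mul_pos hl hc) hx]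

lemma le_volume_inter_flagCone {K : Set (Fin 3 → ℝ)} (hK : Convex ℝ K) (h0 : 0 ∈ K)
    {l : Fin 3 → ℝ} (hl : l ∈ K) (hl0 : 0 ≤ l) {c : Fin 3 → Fin 3 → ℝ} {σ : Equiv.Perm (Fin 3)}
    (he : Pi.single (σ 0) (1 / 2) ∈ K) (hc : c (σ 2) ∈ K) (hc0 : 0 ≤ c (σ 2))
    (hcσ : c (σ 2) (σ 2) = 0) :
    ENNReal.ofReal (l (σ 2) * c (σ 2) (σ 1) / 12) ≤ volume (K ∩ flagCone l c σ) := by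
  obtain hzero | hprod := (mul_nonneg (hl0 (σ 2)) (hc0 (σ 1))).eq_or_lt
  · simp [← hzero]
  have hlσ : 0 < l (σ 2) := (hl0 _).lt_of_ne fun h => by simp [← h] at hprod
  have hcσ₁ : 0 < c (σ 2) (σ 1) := (hc0 _).lt_of_ne fun h => by simp [← h] at hprod
  set M : Matrix (Fin 3) (Fin 3) ℝ :=
    (Matrix.of ![Pi.single (σ 0) (1 / 2), c (σ 2), l]).transpose with hM
  have hdet : |M.det| = l (σ 2) * c (σ 2) (σ 1) / 2 := by
    have h01 : σ 1 ≠ σ 0 := σ.injective.ne (by decide)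
    have h02 : σ 2 ≠ σ 0 := σ.injective.ne (by decide)
    rw [← Matrix.abs_det_submatrix_equiv_equiv σ (Equiv.refl _), Matrix.det_fin_three]
    simp only [hM, Nat.succ_eq_add_one, Nat.reduceAdd, Fin.isValue, one_div, Equiv.coe_refl,
      Matrix.submatrix_apply, id_eq, Matrix.transpose_apply, Matrix.of_apply, Matrix.cons_val',
      Pi.single_eq_same, Matrix.cons_val_fin_one, Matrix.cons_val_zero, ne_eq, h01,
      not_false_eq_true, Pi.single_eq_of_ne, Matrix.cons_val_one, h02, hcσ, Matrix.cons_val,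
      mul_zero, sub_zero, zero_mul, add_zero, abs_mul, abs_inv, Nat.abs_ofNat, abs_of_pos hcσ₁,
      abs_of_pos hlσ]
    ring
  have hvol := volume_image_mulVec_setOf_pos_sum_lt_one M
  rw [hdet, div_div, Fintype.card_fin] at hvol
  norm_num [Nat.factorial] at hvol
  rw [← hvol]
  refine measure_mono ?_
  rintro _ ⟨t, ⟨ht, hsum⟩, rfl⟩
  have happ : M.mulVec t = t 0 • Pi.single (σ 0) (1 / 2) + t 1 • c (σ 2) + t 2 • l := by
    ext a
    simp [hM, Matrix.mulVec, dotProduct, Fin.sum_univ_three, mul_comm]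
  rw [happ]
  refine ⟨?_, smul_add_smul_add_smul_mem_flagCone hlσ (hc0 _) hcσ₁ hcσ (ht 0) (ht 1)⟩
  have hcombo := hK.sum_mem (t := .univ) (w := ![t 0, t 1, t 2, 1 - ∑ i, t i])
    (z := ![Pi.single (σ 0) (1 / 2), c (σ 2), l, 0])
    (by simp [Fin.forall_fin_succ, (ht _).le, hsum.le])
    (by simp [Fin.sum_univ_four, Fin.sum_univ_three])
    (by simpa [Fin.forall_fin_succ, hc, hl, h0] using he)
  simpa [Fin.sum_univ_four] using hcombo

lemma sum_perm_fin_three_eq {M : Type*} [AddCommMonoid M] {f : Fin 3 → Fin 3 → M}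
    (hf : ∀ k, f k k = 0) : ∑ σ : Equiv.Perm (Fin 3), f (σ 2) (σ 1) = ∑ k, ∑ i, f k i := by
  have hinj : Function.Injective fun σ : Equiv.Perm (Fin 3) => (σ 2, σ 1) := by
    unfold Function.Injective
    decide
  have himage : (Finset.univ : Finset (Fin 3)).offDiag =
      Finset.univ.image fun σ : Equiv.Perm (Fin 3) => (σ 2, σ 1) := by
    decide
  rw [← Fintype.sum_prod_type', ← Finset.sum_subset (Finset.subset_univ
    (Finset.univ : Finset (Fin 3)).offDiag), himage, Finset.sum_image hinj.injOn]
  rintro ⟨k, i⟩ _ hki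
  obtain rfl : k = i := by simpa using hki
  exact hf k

lemma sum_perm_le_volume {K : Set (Fin 3 → ℝ)} (hK : Convex ℝ K) (hKm : MeasurableSet K)
    (h0 : 0 ∈ K) (he : ∀ i, Pi.single i (1 / 2) ∈ K) {l : Fin 3 → ℝ} (hl : l ∈ K) (hl0 : 0 ≤ l)
    {c : Fin 3 → Fin 3 → ℝ} (hc : ∀ k, c k ∈ K) (hc0 : ∀ k, 0 ≤ c k) (hck : ∀ k, c k k = 0) :
    ENNReal.ofReal ((∑ k, l k * ∑ i, c k i) / 12) ≤ volume K := by
  have hsum : (∑ k, l k * ∑ i, c k i) / 12 =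
      ∑ σ : Equiv.Perm (Fin 3), l (σ 2) * c (σ 2) (σ 1) / 12 := by
    rw [sum_perm_fin_three_eq (f := fun k i => l k * c k i / 12) (by simp [hck])]
    simp only [Finset.mul_sum, Finset.sum_div]
  calc ENNReal.ofReal ((∑ k, l k * ∑ i, c k i) / 12)
      = ∑ σ : Equiv.Perm (Fin 3), ENNReal.ofReal (l (σ 2) * c (σ 2) (σ 1) / 12) := by
        rw [hsum, ENNReal.ofReal_sum_of_nonneg fun σ _ =>
          div_nonneg (mul_nonneg (hl0 _) (hc0 _ _)) (by norm_num)]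
    _ ≤ ∑ σ, volume (K ∩ flagCone l c σ) := Finset.sum_le_sum fun σ _ =>
        le_volume_inter_flagCone hK h0 hl hl0 (he _) (hc _) (hc0 _) (hck _)
    _ ≤ volume K := by
        rw [← measure_biUnion_finset (fun σ _ τ _ hne =>
          (pairwise_disjoint_flagCone l c hne).mono Set.inter_subset_right Set.inter_subset_right)
          fun σ _ => hKm.inter (measurableSet_flagCone l c σ)]
        exact measure_mono (Set.iUnion₂_subset fun σ _ => Set.inter_subset_left)

end FlagCone

section FaceCenter

variable {ι : Type*}

lemma sq_lt_mul_of_posDef {G : Matrix ι ι ℝ} (hG : G.PosDef) {i j : ι} (hij : i ≠ j) :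
    G i j ^ 2 < G i i * G j j := by
  have hdet := (hG.submatrix (e := ![i, j]) (by
    simp [Function.Injective, Fin.forall_fin_two, hij, hij.symm])).det_pos
  have hsymm : G j i = G i j := hG.isHermitian.apply i j
  simp only [Matrix.det_fin_two, Matrix.submatrix_apply, Matrix.cons_val_zero,
    Matrix.cons_val_one, hsymm] at hdet
  linarith

variable [DecidableEq ι]

/-- The circumcenter of the triangular face spanned by the edge vectors `i` and `j`, in the
coordinates given by the edge vectors; `G` is the Gram matrix of the edge vectors. -/
def faceCenter (G : Matrix ι ι ℝ) (i j : ι) : ι → ℝ :=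
  (Pi.single i (G j j * (G i i - G i j) / (2 * (G i i * G j j - G i j ^ 2))) : ι → ℝ) +
    (Pi.single j (G i i * (G j j - G i j) / (2 * (G i i * G j j - G i j ^ 2))) : ι → ℝ)

lemma faceCenter_comm {G : Matrix ι ι ℝ} (hG : G.PosDef) (i j : ι) :
    faceCenter G i j = faceCenter G j i := by
  have hsymm : G j i = G i j := hG.isHermitian.apply i j
  rw [faceCenter, faceCenter, hsymm, add_comm, mul_comm (G j j) (G i i)]

lemma faceCenter_nonneg {G : Matrix ι ι ℝ} (hG : G.PosDef) {i j : ι} (hij : i ≠ j)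
    (hle : ∀ i j, G i j ≤ G i i) : 0 ≤ faceCenter G i j := by
  have hminor := sub_pos.2 (sq_lt_mul_of_posDef hG hij)
  have hsymm : G j i = G i j := hG.isHermitian.apply i j
  have hi := sub_nonneg.2 (hle i j)
  have hj := sub_nonneg.2 (hsymm ▸ hle j i)
  have hdi := (hG.diag_pos (i := i)).le
  have hdj := (hG.diag_pos (i := j)).le
  exact add_nonneg (Pi.single_nonneg.2 (by positivity)) (Pi.single_nonneg.2 (by positivity))

variable [Fintype ι]

lemma sum_faceCenter (G : Matrix ι ι ℝ) (i j : ι) :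
    ∑ k, faceCenter G i j k = faceSum (G i i) (G j j) (G i j) := by
  simp only [faceCenter, Pi.add_apply, Finset.sum_add_distrib, Finset.sum_pi_single',
    Finset.mem_univ, if_true, faceSum]
  ring

lemma mulVec_faceCenter {G : Matrix ι ι ℝ} (hG : G.PosDef) {i j : ι} (hij : i ≠ j) :
    G.mulVec (faceCenter G i j) i = G i i / 2 := by
  have hminor := sub_pos.2 (sq_lt_mul_of_posDef hG hij)
  simp only [faceCenter, Matrix.mulVec_add, Matrix.mulVec_single, Pi.add_apply, Pi.smul_apply,
    Matrix.col_apply, MulOpposite.smul_eq_mul_unop, MulOpposite.unop_op]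
  field_simp
  ring

end FaceCenter

section VoronoiCoords

variable {ι : Type*} [Fintype ι]

/-- The part of the Voronoi cell of a vertex lying in a simplex, in the coordinates given by the
edge vectors at that vertex; `G` is the Gram matrix of these edge vectors. -/
def voronoiCoords (G : Matrix ι ι ℝ) : Set (ι → ℝ) :=
  {s | (∀ i, 0 ≤ s i) ∧ ∑ i, s i ≤ 1 ∧ ∀ i, G.mulVec s i ≤ G i i / 2}

lemma convex_voronoiCoords (G : Matrix ι ι ℝ) : Convex ℝ (voronoiCoords G) := by
  simp only [voronoiCoords, Set.ofPred_and, Set.ofPred_forall]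
  refine (convex_iInter fun i => ?_).inter (.inter ?_ (convex_iInter fun i => ?_))
  · exact convex_halfSpace_ge (LinearMap.proj i).isLinear 0
  · exact convex_halfSpace_le ⟨fun s t => Finset.sum_add_distrib, fun a s =>
      (Finset.mul_sum ..).symm⟩ 1
  · exact convex_halfSpace_le ((LinearMap.proj i).comp G.mulVecLin).isLinear _

lemma measurableSet_voronoiCoords (G : Matrix ι ι ℝ) : MeasurableSet (voronoiCoords G) := by
  simp only [voronoiCoords, Set.ofPred_and, Set.ofPred_forall, Matrix.mulVec, dotProduct]
  refine (MeasurableSet.iInter fun i => ?_).inter (.inter ?_ (.iInter fun i => ?_))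
  all_goals exact measurableSet_le (by fun_prop) (by fun_prop)

lemma mulVec_le_mulVec_of_forall_ne_eq {G : Matrix ι ι ℝ} (hG : G.PosDef) {s l : ι → ℝ} {k : ι}
    (hs : s k = 0) (hl : 0 ≤ l k) (h : ∀ i ≠ k, G.mulVec s i = G.mulVec l i) :
    G.mulVec s k ≤ G.mulVec l k := by
  by_contra! hlt
  have hne : l - s ≠ 0 := fun h0 => hlt.ne (by rw [sub_eq_zero.1 h0])
  have hpos := hG.dotProduct_mulVec_pos hne
  have hquad : dotProduct (l - s) (G.mulVec (l - s)) = l k * (G.mulVec l k - G.mulVec s k) := by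
    rw [dotProduct, Finset.sum_eq_single k (fun i _ hi => by simp [Matrix.mulVec_sub, h i hi])
      (by simp), Matrix.mulVec_sub, Pi.sub_apply, Pi.sub_apply, hs, sub_zero]
  rw [star_trivial, hquad] at hpos
  exact hpos.not_ge (mul_nonpos_of_nonneg_of_nonpos hl (sub_nonpos.2 hlt.le))

lemma faceCenter_mem_voronoiCoords [DecidableEq ι] {G : Matrix ι ι ℝ} (hG : G.PosDef)
    (hnonneg : ∀ i j, 0 ≤ G i j) (hle : ∀ i j, G i j ≤ G i i) {l : ι → ℝ}
    (hl : l ∈ voronoiCoords G) (hGl : ∀ i, G.mulVec l i = G i i / 2) {i j k : ι} (hij : i ≠ j)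
    (hki : k ≠ i) (hkj : k ≠ j) (hcover : ∀ m, m = i ∨ m = j ∨ m = k) :
    faceCenter G i j ∈ voronoiCoords G := by
  have hsymm : G j i = G i j := hG.isHermitian.apply i j
  have hi := mulVec_faceCenter hG hij
  have hj := mulVec_faceCenter hG hij.symm
  rw [← faceCenter_comm hG] at hj
  refine ⟨faceCenter_nonneg hG hij hle, ?_, fun m => ?_⟩
  · have hminor := sub_pos.2 (sq_lt_mul_of_posDef hG hij)
    rw [sum_faceCenter, faceSum, div_le_one (by positivity)]
    nlinarith [mul_nonneg (hnonneg i j) (sub_nonneg.2 (hle i j)),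
      mul_nonneg (hnonneg i j) (sub_nonneg.2 (hsymm ▸ hle j i))]
  · obtain rfl | rfl | rfl := hcover m
    · exact hi.le
    · exact hj.le
    · refine (mulVec_le_mulVec_of_forall_ne_eq hG ?_ (hl.1 m) fun i' hi' => ?_).trans_eq (hGl m)
      · simp [faceCenter, hki, hkj]
      · obtain rfl | rfl | rfl := hcover i'
        · rw [hi, hGl]
        · rw [hj, hGl]
        · exact absurd rfl hi'

lemma le_volume_voronoiCoords {G : Matrix (Fin 3) (Fin 3) ℝ} (hG : G.PosDef)
    (hnonneg : ∀ i j, 0 ≤ G i j) (hle : ∀ i j, G i j ≤ G i i) {l : Fin 3 → ℝ}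
    (hl : ∀ i, 0 ≤ l i) (hlsum : ∑ i, l i ≤ 1) (hGl : ∀ i, G.mulVec l i = G i i / 2) :
    ENNReal.ofReal ((∑ k, l k *
      faceSum (G (k + 1) (k + 1)) (G (k + 2) (k + 2)) (G (k + 1) (k + 2))) / 12) ≤
      volume (voronoiCoords G) := by
  have hlmem : l ∈ voronoiCoords G := ⟨hl, hlsum, fun i => (hGl i).le⟩
  have hdiag : ∀ i, 0 ≤ G i i / 2 := fun i => half_pos hG.diag_pos |>.le
  have hne : ∀ k : Fin 3, k + 1 ≠ k + 2 ∧ k ≠ k + 1 ∧ k ≠ k + 2 ∧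
      ∀ m, m = k + 1 ∨ m = k + 2 ∨ m = k := by decide
  have hhalf : ∀ i, (0 : Fin 3 → ℝ) ≤ Pi.single i (1 / 2) := fun i =>
    Pi.single_nonneg.2 one_half_pos.le
  have he : ∀ i, Pi.single i (1 / 2) ∈ voronoiCoords G := fun i =>
    ⟨hhalf i, by simpa using (one_half_lt_one (α := ℝ)).le, fun j => by
      simpa [Matrix.mulVec_single, div_eq_mul_inv] using hle j i⟩
  simp only [← sum_faceCenter]
  refine sum_perm_le_volume (convex_voronoiCoords G) (measurableSet_voronoiCoords G)
    ⟨by simp, by simp, by simpa using hdiag⟩ he hlmem hl (fun k => ?_) (fun k => ?_) fun k => ?_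
  all_goals obtain ⟨h12, h1, h2, hcover⟩ := hne k
  · exact faceCenter_mem_voronoiCoords hG hnonneg hle hlmem hGl h12 h1 h2 hcover
  · exact faceCenter_nonneg hG h12 hle
  · simp [faceCenter, h1, h2]

end VoronoiCoords

section EdgeVectors

lemma mem_convexHull_insert_range_iff {ι V : Type*} [Fintype ι] [AddCommGroup V] [Module ℝ V]
    {p₀ x : V} {p : ι → V} :
    x ∈ convexHull ℝ (insert p₀ (Set.range p)) ↔
      ∃ s : ι → ℝ, (∀ i, 0 ≤ s i) ∧ ∑ i, s i ≤ 1 ∧ x = p₀ + ∑ i, s i • (p i - p₀) := by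
  classical
  constructor
  · refine fun hx => convexHull_min (t := {x | ∃ s : ι → ℝ, (∀ i, 0 ≤ s i) ∧ ∑ i, s i ≤ 1 ∧
      x = p₀ + ∑ i, s i • (p i - p₀)}) (Set.insert_subset ⟨0, by simp⟩ ?_) ?_ hx
    · rintro _ ⟨i, rfl⟩
      have hsingle : (0 : ι → ℝ) ≤ Pi.single i 1 := Pi.single_nonneg.2 zero_le_one
      exact ⟨Pi.single i 1, hsingle, by simp, by simp [Pi.single_apply, ite_smul]⟩
    · rintro _ ⟨s, hs, hs1, rfl⟩ _ ⟨t, ht, ht1, rfl⟩ a b ha hb hab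
      refine ⟨a • s + b • t, fun i => ?_, ?_, ?_⟩
      · exact add_nonneg (mul_nonneg ha (hs i)) (mul_nonneg hb (ht i))
      · calc ∑ i, (a • s + b • t) i = a * ∑ i, s i + b * ∑ i, t i := by
              simp [Finset.sum_add_distrib, Finset.mul_sum]
          _ ≤ a * 1 + b * 1 := by gcongr
          _ = 1 := by rw [mul_one, mul_one, hab]
      · simp only [Pi.add_apply, Pi.smul_apply, smul_eq_mul, add_smul, mul_smul,
          Finset.sum_add_distrib, ← Finset.smul_sum]
        obtain rfl := eq_sub_of_add_eq hab
        module
  · rintro ⟨s, hs, hs1, rfl⟩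
    have hcombo := (convex_convexHull ℝ (insert p₀ (Set.range p))).sum_mem (t := .univ)
      (w := fun o : Option ι => o.elim (1 - ∑ i, s i) s) (z := fun o => o.elim p₀ p)
      (by simpa [Option.forall] using ⟨hs1, hs⟩) (by simp [Fintype.sum_option])
      (by simpa [Option.forall] using ⟨subset_convexHull ℝ _ (Set.mem_insert _ _), fun i =>
        subset_convexHull ℝ _ (Set.mem_insert_of_mem _ ⟨i, rfl⟩)⟩)
    rw [Fintype.sum_option] at hcombo
    convert hcombo using 1
    simp only [Option.elim, smul_sub, Finset.sum_sub_distrib, ← Finset.sum_smul]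
    module

variable {ι V : Type*} [NormedAddCommGroup V] [InnerProductSpace ℝ V]

lemma dist_add_le_dist_iff {p q w : V} :
    dist (p + w) p ≤ dist (p + w) q ↔ inner ℝ (q - p) w ≤ ‖q - p‖ ^ 2 / 2 := by
  rw [dist_eq_norm, dist_eq_norm, add_sub_cancel_left, add_comm, add_sub_assoc, ← neg_sub q p,
    ← sub_eq_add_neg, ← sq_le_sq₀ (norm_nonneg _) (norm_nonneg _), norm_sub_sq_real,
    real_inner_comm]
  constructor <;> intro h <;> linarith

lemma gram_sub_apply (p₀ : V) (p : ι → V) (i j : ι) :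
    Matrix.gram ℝ (fun i => p i - p₀) i j =
      (dist p₀ (p i) ^ 2 + dist p₀ (p j) ^ 2 - dist (p i) (p j) ^ 2) / 2 := by
  rw [Matrix.gram_apply,
    real_inner_eq_norm_mul_self_add_norm_mul_self_sub_norm_sub_mul_self_div_two,
    sub_sub_sub_cancel_right, dist_eq_norm', dist_eq_norm', dist_eq_norm, sq, sq, sq]

lemma gram_sub_apply_mem_Icc {p₀ : V} {p : ι → V} {a : ℝ} (ha : 0 ≤ a)
    (h₀ : ∀ i, dist p₀ (p i) ^ 2 ∈ Set.Icc a (2 * a))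
    (h : Pairwise fun i j => dist (p i) (p j) ^ 2 ∈ Set.Icc a (2 * a)) (i j : ι) :
    Matrix.gram ℝ (fun i => p i - p₀) i j ∈
      Set.Icc 0 (Matrix.gram ℝ (fun i => p i - p₀) i i) := by
  have hi := h₀ i
  have hj := h₀ j
  simp only [gram_sub_apply, dist_self]
  obtain rfl | hij := eq_or_ne i j
  · rw [dist_self]
    exact ⟨by linarith [hi.1], le_rfl⟩
  · have := h hij
    constructor <;> linarith [hi.1, hj.1, hj.2, this.1, this.2]

variable [Fintype ι]

lemma gram_mulVec_apply (v : ι → V) (s : ι → ℝ) (i : ι) :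
    (Matrix.gram ℝ v).mulVec s i = inner ℝ (v i) (∑ j, s j • v j) := by
  simp only [Matrix.mulVec, dotProduct, Matrix.gram_apply, inner_sum, real_inner_smul_right,
    mul_comm]

lemma setOf_mem_convexHull_dist_le_eq_image (p₀ : V) (p : ι → V) :
    {x ∈ convexHull ℝ (insert p₀ (Set.range p)) | ∀ i, dist x p₀ ≤ dist x (p i)} =
      (fun s : ι → ℝ => p₀ + ∑ i, s i • (p i - p₀)) ''
        voronoiCoords (Matrix.gram ℝ fun i => p i - p₀) := by
  have hiff (s : ι → ℝ) (i : ι) : dist (p₀ + ∑ i, s i • (p i - p₀)) p₀ ≤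
      dist (p₀ + ∑ i, s i • (p i - p₀)) (p i) ↔
      (Matrix.gram ℝ fun i => p i - p₀).mulVec s i ≤
        Matrix.gram ℝ (fun i => p i - p₀) i i / 2 := by
    rw [dist_add_le_dist_iff, gram_mulVec_apply, Matrix.gram_apply, real_inner_self_eq_norm_sq]
  ext x
  constructor
  · rintro ⟨hx, hdist⟩
    obtain ⟨s, hs, hs1, rfl⟩ := mem_convexHull_insert_range_iff.1 hx
    exact ⟨s, ⟨hs, hs1, fun i => (hiff s i).1 (hdist i)⟩, rfl⟩
  · rintro ⟨s, ⟨hs, hs1, hG⟩, rfl⟩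
    exact ⟨mem_convexHull_insert_range_iff.2 ⟨s, hs, hs1, rfl⟩, fun i => (hiff s i).2 (hG i)⟩

lemma volume_image_sum_smul [DecidableEq ι] (v : ι → EuclideanSpace ℝ ι) (S : Set (ι → ℝ)) :
    volume ((fun s : ι → ℝ => ∑ i, s i • v i) '' S) =
      ENNReal.ofReal √(Matrix.gram ℝ v).det * volume S := by
  set M : Matrix ι ι ℝ := .of fun a i => v i a
  have hgram : Matrix.gram ℝ v = M.transpose * M := by
    ext i j
    simp [M, Matrix.mul_apply, PiLp.inner_apply, mul_comm]
  have himage : (fun s : ι → ℝ => ∑ i, s i • v i) '' S =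
      (MeasurableEquiv.toLp 2 (ι → ℝ)).symm ⁻¹' (Matrix.toLin' M '' S) := by
    rw [← MeasurableEquiv.image_eq_preimage_symm, Set.image_image]
    refine Set.image_congr fun s _ => ?_
    ext a
    simp [M, Matrix.mulVec, dotProduct, mul_comm]
  rw [himage, (EuclideanSpace.volume_preserving_symm_measurableEquiv_toLp ι).measure_preimage_equiv,
    Measure.addHaar_image_linearMap, LinearMap.det_toLin', hgram, Matrix.det_mul,
    Matrix.det_transpose, sqrt_mul_self_eq_abs]

lemma volume_setOf_mem_convexHull_dist_le [DecidableEq ι] (p₀ : EuclideanSpace ℝ ι)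
    (p : ι → EuclideanSpace ℝ ι) :
    volume {x ∈ convexHull ℝ (insert p₀ (Set.range p)) | ∀ i, dist x p₀ ≤ dist x (p i)} =
      ENNReal.ofReal √(Matrix.gram ℝ fun i => p i - p₀).det *
        volume (voronoiCoords (Matrix.gram ℝ fun i => p i - p₀)) := by
  rw [setOf_mem_convexHull_dist_le_eq_image, ← volume_image_sum_smul, ← Set.image_image (p₀ + ·),
    Set.image_add_left, measure_preimage_add]

lemma exists_circumcenter_coords {p₀ c : V} {p : ι → V}
    (hc : c ∈ convexHull ℝ (insert p₀ (Set.range p))) (hdist : ∀ i, dist c p₀ = dist c (p i)) :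
    ∃ l : ι → ℝ, (∀ i, 0 ≤ l i) ∧ ∑ i, l i ≤ 1 ∧
      ∀ i, (Matrix.gram ℝ fun i => p i - p₀).mulVec l i =
        Matrix.gram ℝ (fun i => p i - p₀) i i / 2 := by
  obtain ⟨l, hl, hlsum, rfl⟩ := mem_convexHull_insert_range_iff.1 hc
  refine ⟨l, hl, hlsum, fun i => ?_⟩
  have hinner := AffineSubspace.mem_perpBisector_iff_inner_eq.1
    (AffineSubspace.mem_perpBisector_iff_dist_eq.2 (hdist i))
  rw [vsub_eq_sub, vsub_eq_sub, add_sub_cancel_left, real_inner_comm, dist_eq_norm'] at hinner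
  rw [gram_mulVec_apply, hinner, Matrix.gram_apply, real_inner_self_eq_norm_sq]

end EdgeVectors

section SimplexScore

lemma det_eq_gramDet {G : Matrix (Fin 3) (Fin 3) ℝ} (hG : G.IsSymm) :
    G.det = gramDet (G 0 0) (G 1 1) (G 2 2) (G 0 1) (G 0 2) (G 1 2) := by
  rw [Matrix.det_fin_three, hG.apply 0 1, hG.apply 0 2, hG.apply 1 2, gramDet]
  ring

lemma isSymm_gram {ι V : Type*} [NormedAddCommGroup V] [InnerProductSpace ℝ V] (v : ι → V) :
    (Matrix.gram ℝ v).IsSymm :=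
  Matrix.IsSymm.ext fun _ _ => real_inner_comm _ _

lemma det_gram_eq_sq_triple (v : Fin 3 → E3) :
    (Matrix.gram ℝ v).det = triple (v 0) (v 1) (v 2) ^ 2 := by
  simp only [det_eq_gramDet (isSymm_gram v), triple_sq, Matrix.gram_apply,
    real_inner_self_eq_norm_sq]

lemma volume_closedBall_inter_cone_convexHull_le {p₀ : E3} {p : Fin 3 → E3}
    (hp : LinearIndependent ℝ fun i => p i - p₀)
    (hA : 0 < solidAngleDenom (p 0 - p₀) (p 1 - p₀) (p 2 - p₀)) :
    volume.real (Metric.closedBall p₀ 1 ∩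
        {y | ∃ x ∈ convexHull ℝ (insert p₀ (Set.range p)), ∃ t : ℝ, 0 ≤ t ∧
          y = p₀ + t • (x - p₀)}) ≤
      2 / 3 * arctan (√(Matrix.gram ℝ fun i => p i - p₀).det /
        solidAngleDenom (p 0 - p₀) (p 1 - p₀) (p 2 - p₀)) := by
  have htriple : triple (p 0 - p₀) (p 1 - p₀) (p 2 - p₀) ≠ 0 := fun h0 =>
    Matrix.det_gram_ne_zero_iff_linearIndependent.2 hp (by
      rw [det_gram_eq_sq_triple, h0, zero_pow two_ne_zero])
  rw [det_gram_eq_sq_triple, sqrt_sq_eq_abs]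
  refine le_trans ?_ (volume_closedBall_inter_cone_le htriple hA)
  rw [measureReal_def, ← measure_preimage_add volume p₀, ← measureReal_def]
  refine measureReal_mono ?_
    ((measure_mono Set.inter_subset_left).trans_lt measure_closedBall_lt_top).ne
  rintro w ⟨hball, x, hx, t, ht, hw⟩
  obtain ⟨s, hs, -, rfl⟩ := mem_convexHull_insert_range_iff.1 hx
  refine ⟨by simpa using hball, t * s 0, t * s 1, t * s 2, mul_nonneg ht (hs 0),
    mul_nonneg ht (hs 1), mul_nonneg ht (hs 2), ?_⟩
  rw [add_left_cancel hw, add_sub_cancel_left, Fin.sum_univ_three]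
  simp only [smul_add, mul_smul]

lemma le_volume_real_setOf_mem_convexHull_dist_le {p₀ : E3} {p : Fin 3 → E3}
    {G : Matrix (Fin 3) (Fin 3) ℝ} (hG : G = Matrix.gram ℝ fun i => p i - p₀) (hpos : G.PosDef)
    (hmem : ∀ i j, G i j ∈ Set.Icc 0 (G i i)) {l : Fin 3 → ℝ} (hl : ∀ i, 0 ≤ l i)
    (hlsum : ∑ i, l i ≤ 1) (hGl : ∀ i, G.mulVec l i = G i i / 2) :
    √G.det / 12 * ∑ k, l k *
        faceSum (G (k + 1) (k + 1)) (G (k + 2) (k + 2)) (G (k + 1) (k + 2)) ≤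
      volume.real {x ∈ convexHull ℝ (insert p₀ (Set.range p)) |
        ∀ i, dist x p₀ ≤ dist x (p i)} := by
  have hcell := le_volume_voronoiCoords hpos (fun i j => (hmem i j).1) (fun i j => (hmem i j).2)
    hl hlsum hGl
  have hbounded : Bornology.IsBounded (convexHull ℝ (insert p₀ (Set.range p))) :=
    isBounded_convexHull.2 ((Set.finite_range p).insert p₀).isBounded
  refine (ENNReal.ofReal_le_iff_le_toReal
    ((measure_mono fun x hx => hx.1).trans_lt hbounded.measure_lt_top).ne).1 ?_
  rw [volume_setOf_mem_convexHull_dist_le, ← hG, div_mul_eq_mul_div, mul_div_assoc,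
    ENNReal.ofReal_mul (sqrt_nonneg _)]
  gcongr

lemma cramerNum_eq {x₁ x₂ x₃ g₁₂ g₁₃ g₂₃ l₁ l₂ l₃ : ℝ}
    (h₁ : x₁ * l₁ + g₁₂ * l₂ + g₁₃ * l₃ = x₁ / 2) (h₂ : g₁₂ * l₁ + x₂ * l₂ + g₂₃ * l₃ = x₂ / 2)
    (h₃ : g₁₃ * l₁ + g₂₃ * l₂ + x₃ * l₃ = x₃ / 2) :
    cramerNum x₁ x₂ x₃ g₁₂ g₁₃ g₂₃ = gramDet x₁ x₂ x₃ g₁₂ g₁₃ g₂₃ * l₁ := by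
  unfold cramerNum gramDet
  linear_combination -(x₂ * x₃ - g₂₃ ^ 2) * h₁ + (g₁₂ * x₃ - g₁₃ * g₂₃) * h₂
    + (g₁₃ * x₂ - g₁₂ * g₂₃) * h₃

lemma cramerNum_eq_det_mul {G : Matrix (Fin 3) (Fin 3) ℝ} (hG : G.IsSymm) {l : Fin 3 → ℝ}
    (hGl : ∀ i, G.mulVec l i = G i i / 2) :
    cramerNum (G 0 0) (G 1 1) (G 2 2) (G 0 1) (G 0 2) (G 1 2) = G.det * l 0 ∧
    cramerNum (G 1 1) (G 0 0) (G 2 2) (G 0 1) (G 1 2) (G 0 2) = G.det * l 1 ∧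
    cramerNum (G 2 2) (G 0 0) (G 1 1) (G 0 2) (G 1 2) (G 0 1) = G.det * l 2 := by
  have hrow (i : Fin 3) : G i 0 * l 0 + G i 1 * l 1 + G i 2 * l 2 = G i i / 2 := by
    rw [← hGl, Matrix.mulVec, dotProduct, Fin.sum_univ_three]
  have h₀ := hrow 0
  have h₁ := hrow 1
  have h₂ := hrow 2
  rw [hG.apply 0 1] at h₁
  rw [hG.apply 0 2, hG.apply 1 2] at h₂
  rw [det_eq_gramDet hG]
  refine ⟨cramerNum_eq h₀ h₁ h₂, ?_, ?_⟩
  · rw [cramerNum_eq (l₁ := l 1) (l₂ := l 0) (l₃ := l 2) (by linarith) (by linarith) (by linarith)]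
    unfold gramDet
    ring
  · rw [cramerNum_eq (l₁ := l 2) (l₂ := l 0) (l₃ := l 1) (by linarith) (by linarith) (by linarith)]
    unfold gramDet
    ring

lemma linearIndependent_sub_of_affineIndependent {V : Type*} [AddCommGroup V] [Module ℝ V] {n : ℕ}
    {p₀ : V} {p : Fin n → V} (h : AffineIndependent ℝ (Fin.cons p₀ p : Fin (n + 1) → V)) :
    LinearIndependent ℝ fun i => p i - p₀ :=
  ((affineIndependent_iff_linearIndependent_vsub ℝ _ 0).1 h).comp
    (fun i : Fin n => ⟨i.succ, i.succ_ne_zero⟩) fun i j hij => by simpa using hij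

lemma range_fin_three {α : Type*} (p : Fin 3 → α) : Set.range p = {p 0, p 1, p 2} := by
  ext x
  simp [Fin.exists_fin_succ, eq_comm]

lemma vor_eq (p₀ : E3) (p : Fin 3 → E3) : vor p₀ (p 0) (p 1) (p 2) =
    4 * (-δoct * volume.real {x ∈ convexHull ℝ (insert p₀ (Set.range p)) |
        ∀ i, dist x p₀ ≤ dist x (p i)} +
      volume.real (Metric.closedBall p₀ 1 ∩
        {y | ∃ x ∈ convexHull ℝ (insert p₀ (Set.range p)), ∃ t : ℝ, 0 ≤ t ∧
          y = p₀ + t • (x - p₀)})) := by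
  simp only [vor, measureReal_def, range_fin_three, Fin.forall_fin_succ, Fin.isValue,
    Fin.succ_zero_eq_one, Fin.succ_one_eq_two, IsEmpty.forall_iff, and_true]

lemma vor_neg_of_arctan_lt {p₀ : E3} {p : Fin 3 → E3} {G : Matrix (Fin 3) (Fin 3) ℝ}
    (hG : G = Matrix.gram ℝ fun i => p i - p₀) (hp : LinearIndependent ℝ fun i => p i - p₀)
    (hmem : ∀ i j, G i j ∈ Set.Icc 0 (G i i)) {l : Fin 3 → ℝ} (hl : ∀ i, 0 ≤ l i)
    (hlsum : ∑ i, l i ≤ 1) (hGl : ∀ i, G.mulVec l i = G i i / 2)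
    (harctan : 2 / 3 * arctan (√G.det / solidAngleDenom (p 0 - p₀) (p 1 - p₀) (p 2 - p₀)) <
      δoct * (√G.det / 12 * ∑ k, l k *
        faceSum (G (k + 1) (k + 1)) (G (k + 2) (k + 2)) (G (k + 1) (k + 2)))) :
    vor p₀ (p 0) (p 1) (p 2) < 0 := by
  have hinner (i j : Fin 3) : 0 ≤ inner ℝ (p i - p₀) (p j - p₀) := by
    simpa only [hG, Matrix.gram_apply] using (hmem i j).1
  have hnorm (i : Fin 3) : 0 < ‖p i - p₀‖ := norm_pos_iff.2 (hp.ne_zero i)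
  have hA : 0 < solidAngleDenom (p 0 - p₀) (p 1 - p₀) (p 2 - p₀) := by
    have := mul_pos (mul_pos (hnorm 0) (hnorm 1)) (hnorm 2)
    have := mul_nonneg (hnorm 0).le (hinner 1 2)
    have := mul_nonneg (hnorm 1).le (hinner 0 2)
    have := mul_nonneg (hnorm 2).le (hinner 0 1)
    unfold solidAngleDenom
    linarith
  have hcone := volume_closedBall_inter_cone_convexHull_le hp hA
  have hcell := le_volume_real_setOf_mem_convexHull_dist_le hG
    (hG ▸ Matrix.posDef_gram_of_linearIndependent hp) hmem hl hlsum hGl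
  have hδ : 0 ≤ δoct := by linarith [lt_δoct]
  rw [← hG] at hcone
  rw [vor_eq]
  linarith [mul_le_mul_of_nonneg_left hcell hδ]

lemma faceSum_comm (x y g : ℝ) : faceSum x y g = faceSum y x g := by
  unfold faceSum
  ring

lemma arctan_lt_of_edge_lengths {p₀ : E3} {p : Fin 3 → E3} {G : Matrix (Fin 3) (Fin 3) ℝ}
    (hG : G = Matrix.gram ℝ fun i => p i - p₀) (hp : LinearIndependent ℝ fun i => p i - p₀)
    (h₁ : dist p₀ (p 0) ∈ Set.Icc 2.51 (2 * √2)) (h₂ : dist p₀ (p 1) ∈ Set.Icc 2 2.51)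
    (h₃ : dist p₀ (p 2) ∈ Set.Icc 2 2.51) (h₄ : dist (p 1) (p 2) ∈ Set.Icc 2 2.51)
    (h₅ : dist (p 0) (p 2) ∈ Set.Icc 2 2.51) (h₆ : dist (p 0) (p 1) ∈ Set.Icc 2 2.51)
    (hsum : 12.24 + dist p₀ (p 0) ^ 2 < dist p₀ (p 1) ^ 2 + dist p₀ (p 2) ^ 2
      + dist (p 1) (p 2) ^ 2 + dist (p 0) (p 2) ^ 2 + dist (p 0) (p 1) ^ 2)
    {l : Fin 3 → ℝ} (hl : ∀ i, 0 ≤ l i) (hGl : ∀ i, G.mulVec l i = G i i / 2) :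
    2 / 3 * arctan (√G.det / solidAngleDenom (p 0 - p₀) (p 1 - p₀) (p 2 - p₀)) <
      δoct * (√G.det / 12 * ∑ k, l k *
        faceSum (G (k + 1) (k + 1)) (G (k + 2) (k + 2)) (G (k + 1) (k + 2))) := by
  have hsymm : G.IsSymm := hG ▸ isSymm_gram _
  have hdet : 0 < G.det := hG ▸ (Matrix.posDef_gram_of_linearIndependent hp).det_pos
  have hsq : √G.det ^ 2 = G.det := sq_sqrt hdet.le
  have hentry (i j : Fin 3) : G i j =
      (dist p₀ (p i) ^ 2 + dist p₀ (p j) ^ 2 - dist (p i) (p j) ^ 2) / 2 :=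
    hG ▸ gram_sub_apply p₀ p i j
  have hdiag (i : Fin 3) : dist p₀ (p i) ^ 2 = G i i := by
    rw [hentry, dist_self]
    ring
  have hdenom : solidAngleDenom (p 0 - p₀) (p 1 - p₀) (p 2 - p₀) =
      dist p₀ (p 0) * dist p₀ (p 1) * dist p₀ (p 2) + dist p₀ (p 0) * G 1 2
        + dist p₀ (p 1) * G 0 2 + dist p₀ (p 2) * G 0 1 := by
    simp only [solidAngleDenom, dist_eq_norm', hG, Matrix.gram_apply]
  obtain ⟨hN₀, hN₁, hN₂⟩ := cramerNum_eq_det_mul hsymm hGl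
  have hsum_face : ∑ k, l k *
      faceSum (G (k + 1) (k + 1)) (G (k + 2) (k + 2)) (G (k + 1) (k + 2)) =
      l 0 * faceSum (G 1 1) (G 2 2) (G 1 2) + l 1 * faceSum (G 0 0) (G 2 2) (G 0 2)
        + l 2 * faceSum (G 0 0) (G 1 1) (G 0 1) := by
    rw [Fin.sum_univ_three, faceSum_comm (G 0 0) (G 2 2), ← hsymm.apply 0 2]
    rfl
  rw [← hsq] at hN₀ hN₁ hN₂
  have hdetD : √G.det ^ 2 = _ := hsq.trans (det_eq_gramDet hsymm)
  rw [hdenom, hsum_face]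
  simp only [← hdiag] at hN₀ hN₁ hN₂ hdetD ⊢
  exact two_thirds_arctan_lt h₁ h₂ h₃ h₄ h₅ h₆ hsum (hentry 0 1) (hentry 0 2) (hentry 1 2)
    (sqrt_pos.2 hdet) hdetD (hl 0) (hl 1) (hl 2) hN₀ hN₁ hN₂

lemma gram_apply_mem_Icc_of_edge_lengths {p₀ : E3} {p : Fin 3 → E3}
    (h₁ : dist p₀ (p 0) ∈ Set.Icc 2.51 (2 * √2)) (h₂ : dist p₀ (p 1) ∈ Set.Icc 2 2.51)
    (h₃ : dist p₀ (p 2) ∈ Set.Icc 2 2.51) (h₄ : dist (p 1) (p 2) ∈ Set.Icc 2 2.51)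
    (h₅ : dist (p 0) (p 2) ∈ Set.Icc 2 2.51) (h₆ : dist (p 0) (p 1) ∈ Set.Icc 2 2.51)
    (i j : Fin 3) :
    Matrix.gram ℝ (fun i => p i - p₀) i j ∈
      Set.Icc 0 (Matrix.gram ℝ (fun i => p i - p₀) i i) := by
  have hlong : dist p₀ (p 0) ^ 2 ∈ Set.Icc (4 : ℝ) (2 * 4) := by
    have := eight_sub_sq_mem_Icc h₁
    constructor <;> linarith [this.1, this.2]
  have hshort {y : ℝ} (hy : y ∈ Set.Icc 2 2.51) : y ^ 2 ∈ Set.Icc (4 : ℝ) (2 * 4) := by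
    have := sq_sub_four_mem_Icc hy
    constructor <;> linarith [this.1, this.2]
  refine gram_sub_apply_mem_Icc (by norm_num) (Fin.forall_fin_succ.2 ⟨hlong,
    Fin.forall_fin_two.2 ⟨hshort h₂, hshort h₃⟩⟩) (fun i j hij => ?_) i j
  wlog hlt : i < j generalizing i j
  · rw [dist_comm]
    exact this j i hij.symm (hij.lt_or_gt.resolve_left hlt)
  fin_cases i <;> fin_cases j <;> first | exact absurd hlt (by decide) | exact hshort ‹_›

-- In each of the three cells `y₂² + ⋯ + y₆² ≥ 4 · 2² + 2.06² > 12.24 + 8 ≥ 12.24 + y₁²`.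
theorem vor_neg_long_first_edge_general (p₀ p₁ p₂ p₃ : E3)
    (hindep : AffineIndependent ℝ ![p₀, p₁, p₂, p₃]) (hcc : ContainsCircumcenter p₀ p₁ p₂ p₃)
    (h₁ : dist p₀ p₁ ∈ Set.Icc 2.51 (2 * √2)) (h₂ : dist p₀ p₂ ∈ Set.Icc 2 2.51)
    (h₃ : dist p₀ p₃ ∈ Set.Icc 2 2.51) (h₄ : dist p₂ p₃ ∈ Set.Icc 2 2.51)
    (h₅ : dist p₁ p₃ ∈ Set.Icc 2 2.51) (h₆ : dist p₁ p₂ ∈ Set.Icc 2 2.51)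
    (hsum : 12.24 + dist p₀ p₁ ^ 2 < dist p₀ p₂ ^ 2 + dist p₀ p₃ ^ 2 + dist p₂ p₃ ^ 2
      + dist p₁ p₃ ^ 2 + dist p₁ p₂ ^ 2) :
    vor p₀ p₁ p₂ p₃ < 0 := by
  obtain ⟨p, hp, rfl, rfl, rfl⟩ : ∃ p : Fin 3 → E3,
      LinearIndependent ℝ (fun i => p i - p₀) ∧ p 0 = p₁ ∧ p 1 = p₂ ∧ p 2 = p₃ :=
    ⟨![p₁, p₂, p₃], linearIndependent_sub_of_affineIndependent hindep, rfl, rfl, rfl⟩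
  obtain ⟨c, hc, hc₁, hc₂, hc₃⟩ := hcc
  obtain ⟨l, hl, hlsum, hGl⟩ := exists_circumcenter_coords (range_fin_three p ▸ hc)
    (Fin.forall_fin_succ.2 ⟨hc₁, Fin.forall_fin_two.2 ⟨hc₂, hc₃⟩⟩)
  exact vor_neg_of_arctan_lt rfl hp (gram_apply_mem_Icc_of_edge_lengths h₁ h₂ h₃ h₄ h₅ h₆) hl
    hlsum hGl (arctan_lt_of_edge_lengths rfl hp h₁ h₂ h₃ h₄ h₅ h₆ hsum hl hGl)

end SimplexScore

/-- Calculation 4.5.2, cells (1)–(3): Voronoi scoring of small simplices with a long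
first edge is negative. -/
theorem vor_neg_long_first_edge (p₀ p₁ p₂ p₃ : E3)
    (hindep : AffineIndependent ℝ ![p₀, p₁, p₂, p₃])
    (hsmall : IsSmall p₀ p₁ p₂ p₃)
    (hcc : ContainsCircumcenter p₀ p₁ p₂ p₃)
    (h1 : dist p₀ p₁ ∈ Set.Icc (2.51 : ℝ) (2 * Real.sqrt 2))
    (hcase : (dist p₀ p₂ ∈ Set.Icc (2.06 : ℝ) (2.51) ∧ dist p₀ p₃ ∈ Set.Icc (2 : ℝ) (2.51) ∧ dist p₂ p₃ ∈ Set.Icc (2 : ℝ) (2.51) ∧ dist p₁ p₃ ∈ Set.Icc (2 : ℝ) (2.51) ∧ dist p₁ p₂ ∈ Set.Icc (2 : ℝ) (2.51)) ∨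
      (dist p₂ p₃ ∈ Set.Icc (2.06 : ℝ) (2.51) ∧ dist p₀ p₂ ∈ Set.Icc (2 : ℝ) (2.51) ∧ dist p₀ p₃ ∈ Set.Icc (2 : ℝ) (2.51) ∧ dist p₁ p₃ ∈ Set.Icc (2 : ℝ) (2.51) ∧ dist p₁ p₂ ∈ Set.Icc (2 : ℝ) (2.51)) ∨
      (dist p₁ p₃ ∈ Set.Icc (2.08 : ℝ) (2.51) ∧ dist p₀ p₂ ∈ Set.Icc (2 : ℝ) (2.51) ∧ dist p₀ p₃ ∈ Set.Icc (2 : ℝ) (2.51) ∧ dist p₂ p₃ ∈ Set.Icc (2 : ℝ) (2.51) ∧ dist p₁ p₂ ∈ Set.Icc (2 : ℝ) (2.51))) :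
    vor p₀ p₁ p₂ p₃ < 0 := by
  have hIcc {y x : ℝ} (hx : 2 ≤ x) (hy : y ∈ Set.Icc x 2.51) : y ∈ Set.Icc 2 2.51 :=
    Set.Icc_subset_Icc_left hx hy
  have hsq {y x : ℝ} (hx : 0 ≤ x) (hy : y ∈ Set.Icc x 2.51) : x ^ 2 ≤ y ^ 2 :=
    pow_le_pow_left₀ hx hy.1 2
  have h1sq := (eight_sub_sq_mem_Icc h1).1
  rcases hcase with ⟨h2, h3, h4, h5, h6⟩ | ⟨h4, h2, h3, h5, h6⟩ | ⟨h5, h2, h3, h4, h6⟩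
  all_goals
    refine vor_neg_long_first_edge_general p₀ p₁ p₂ p₃ hindep hcc h1 (hIcc ?_ h2) (hIcc ?_ h3)
      (hIcc ?_ h4) (hIcc ?_ h5) (hIcc ?_ h6) ?_
    any_goals norm_num1
    linarith [hsq (by norm_num) h2, hsq (by norm_num) h3, hsq (by norm_num) h4,
      hsq (by norm_num) h5, hsq (by norm_num) h6]
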